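/- arXiv:1507.05890 — 9 statements merged into one kernel-verified Lean document; each statement's English description precedes it below -/
import Mathlib

section
/- Let G be a connected finite simple graph of minimum degree at least two with cyclomatic number k, and let S be the set of vertices of G of degree at least three. If S is nonempty, then the number of connected components of the graph G − S (obtained by deleting the vertices of S and their incident edges) is at most k + |S| − 1. -/
open Finset

namespace SimpleGraph

variable {V : Type*} {G : SimpleGraph V}

/-- The number of ordered adjacent pairs inside a finite vertex set is even. -/
theorem even_sum_card_adj_mem (G : SimpleGraph V) [DecidableRel G.Adj] (A : Finset V) :
    Even (∑ v ∈ A, #{w ∈ A | G.Adj v w}) := by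
  have h := (G.induce (A : Set V)).sum_degrees_eq_twice_card_edges
  have hd (v : (A : Set V)) : (G.induce (A : Set V)).degree v = #{w ∈ A | G.Adj v w} := by
    rw [← card_neighborFinset_eq_degree, ← Finset.card_map (Function.Embedding.subtype _)]
    congr 1
    ext w
    simp [and_comm]
  rw [← Finset.sum_coe_sort]
  simp only [hd] at h
  exact ⟨_, h.trans (two_mul _)⟩

/-- In a connected graph, a nonempty vertex set and its nonempty complement are joined by an
edge. -/
theorem Connected.exists_adj_mem_notMem (hG : G.Connected) {A : Finset V} {a b : V}
    (ha : a ∈ A) (hb : b ∉ A) : ∃ v ∈ A, ∃ w ∉ A, G.Adj v w := by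
  obtain ⟨p⟩ := hG.preconnected a b
  obtain ⟨d, -, h₁, h₂⟩ := p.exists_boundary_dart (A : Set V) ha hb
  exact ⟨d.fst, h₁, d.snd, h₂, d.adj⟩

variable [Fintype V] [DecidableEq V] [DecidableRel G.Adj]

/-- In a connected graph, at least two edges leave a proper nonempty set of vertices of degree
two. -/
theorem Connected.two_le_sum_card_adj_notMem (hG : G.Connected) {A : Finset V} {a b : V}
    (ha : a ∈ A) (hb : b ∉ A) (hdeg : ∀ v ∈ A, G.degree v = 2) :
    2 ≤ ∑ v ∈ A, #{w | w ∉ A ∧ G.Adj v w} := by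
  obtain ⟨v, hv, w, hw, hvw⟩ := hG.exists_adj_mem_notMem ha hb
  have hpos : 0 < ∑ v ∈ A, #{w | w ∉ A ∧ G.Adj v w} :=
    Finset.sum_pos' (fun _ _ => Nat.zero_le _)
      ⟨v, hv, Finset.card_pos.2 ⟨w, by simp [hw, hvw]⟩⟩
  have hsum : ∑ v ∈ A, #{w ∈ A | G.Adj v w} + ∑ v ∈ A, #{w | w ∉ A ∧ G.Adj v w} = #A * 2 := by
    rw [← Finset.sum_add_distrib]
    refine Finset.sum_const_nat fun v hv => ?_
    rw [← hdeg v hv, ← card_neighborFinset_eq_degree,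
      ← Finset.card_filter_add_card_filter_not (s := G.neighborFinset v) (· ∈ A)]
    congr 2 <;> ext w <;> simp [and_comm]
  obtain ⟨r, hr⟩ := G.even_sum_card_adj_mem A
  omega

/-- If deleting a nonempty vertex set `S` from a connected graph leaves only vertices of degree two
in the original graph, then the degrees in `S` sum to at least twice the number of components
left. -/
theorem Connected.two_mul_card_connectedComponent_induce_le_sum_degree (hG : G.Connected)
    {S : Finset V} (hS : S.Nonempty) (hdeg : ∀ v ∉ S, G.degree v = 2) :
    2 * Nat.card (G.induce {v | v ∉ S}).ConnectedComponent ≤ ∑ v ∈ S, G.degree v := by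
  classical
  let H := G.induce {v | v ∉ S}
  let A (C : H.ConnectedComponent) : Finset V :=
    {v | ∃ h : v ∉ S, H.connectedComponentMk ⟨v, h⟩ = C}
  have hA {C v} : v ∈ A C ↔ ∃ h : v ∉ S, H.connectedComponentMk ⟨v, h⟩ = C := by simp [A]
  have hdisj : (Set.univ : Set H.ConnectedComponent).PairwiseDisjoint A := by
    intro C _ D _ hCD
    refine Finset.disjoint_left.2 fun v hC hD => hCD ?_
    obtain ⟨_, rfl⟩ := hA.1 hC
    obtain ⟨_, rfl⟩ := hA.1 hD
    rfl
  have hout (C : H.ConnectedComponent) : 2 ≤ ∑ v ∈ A C, #{w ∈ S | G.Adj v w} := by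
    obtain ⟨s, hs⟩ := hS
    obtain ⟨⟨a, ha⟩, rfl⟩ := C.exists_rep
    refine (hG.two_le_sum_card_adj_notMem (hA.2 ⟨ha, rfl⟩) (b := s)
      (fun h => (hA.1 h).1 hs) fun v hv => hdeg v (hA.1 hv).1).trans
      (Finset.sum_le_sum fun v hv => Finset.card_le_card fun w hw => ?_)
    obtain ⟨hw, hvw⟩ := (Finset.mem_filter.1 hw).2
    obtain ⟨hvS, hvC⟩ := hA.1 hv
    refine Finset.mem_filter.2 ⟨by_contra fun hwS => hw (hA.2 ⟨hwS, ?_⟩), hvw⟩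
    rw [← hvC]
    refine ConnectedComponent.sound (Adj.reachable ?_)
    exact hvw.symm
  calc
    2 * Nat.card H.ConnectedComponent = ∑ _C : H.ConnectedComponent, 2 := by
      simp [mul_comm, Nat.card_eq_fintype_card]
    _ ≤ ∑ C, ∑ v ∈ A C, #{w ∈ S | G.Adj v w} := Finset.sum_le_sum fun C _ => hout C
    _ = ∑ v ∈ Finset.univ.biUnion A, #{w ∈ S | G.Adj v w} :=
      (Finset.sum_biUnion (by simpa using hdisj)).symm
    _ ≤ ∑ v, #{w ∈ S | G.Adj v w} := Finset.sum_le_sum_of_subset (Finset.subset_univ _)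
    _ = ∑ w ∈ S, #{v | G.Adj v w} :=
      Finset.sum_card_bipartiteAbove_eq_sum_card_bipartiteBelow G.Adj
    _ = ∑ w ∈ S, G.degree w := by
      refine Finset.sum_congr rfl fun w _ => ?_
      rw [← card_neighborFinset_eq_degree]
      congr 1
      ext v
      simp [G.adj_comm]

end SimpleGraph

/-- Let `G` be a connected finite simple graph of minimum degree at
least two with cyclomatic number `k` (i.e. `|E(G)| = k + (|V(G)| - 1)`), and let `S`
be the set of vertices of degree at least three.  If `S` is nonempty, then the number
of connected components of `G − S` (the induced subgraph on the vertices of degree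
less than three) is at most `k + |S| - 1`. -/
theorem stmt_1 {V : Type} [Fintype V] [DecidableEq V] (G : SimpleGraph V)
    [DecidableRel G.Adj] (hconn : G.Connected) (hdeg : ∀ v : V, 2 ≤ G.degree v)
    (k : ℕ) (hk : G.edgeFinset.card = k + (Fintype.card V - 1))
    (hS : {v : V | 3 ≤ G.degree v}.Nonempty) :
    Nat.card ((G.induce {v : V | ¬ 3 ≤ G.degree v}).ConnectedComponent) ≤
      k + ({v : V | 3 ≤ G.degree v} : Set V).ncard - 1 := by
  let S : Finset V := {v | 3 ≤ G.degree v}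
  have hSdeg : ∀ v ∉ S, G.degree v = 2 := fun v hv => by
    have := hdeg v
    simp only [S, Finset.mem_filter_univ] at hv
    omega
  have hSne : S.Nonempty := by simpa [S, Finset.filter_nonempty_iff, Set.Nonempty] using hS
  have hle := hconn.two_mul_card_connectedComponent_induce_le_sum_degree hSne hSdeg
  have hset : {v | v ∉ S} = {v : V | ¬ 3 ≤ G.degree v} := by ext; simp [S]
  rw [hset] at hle
  have hncard : ({v : V | 3 ≤ G.degree v} : Set V).ncard = #S := by
    rw [← Set.ncard_coe_finset]
    simp [S]
  have hsum := G.sum_degrees_eq_twice_card_edges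
  rw [← Finset.sum_add_sum_compl S,
    Finset.sum_const_nat fun v hv => hSdeg v (Finset.mem_compl.1 hv)] at hsum
  have hcard := S.card_add_card_compl
  have hpos := hSne.card_pos
  omega
end

section
/- Let (G, z, P, b) be an instance of Hitting Paths in a Flower, let R_i be a petal and 1 ≤ ℓ ≤ |V(R_i)|, and let X_{i,ℓ} be the set produced by the canonical-solution process, assuming that step (1) does not apply and that the loop of step (2b) is never executed during the process. Partition the interval {r_{i,ℓ}, …, r_{i,max(X_{i,ℓ})}} into |X_{i,ℓ}| maximal subpaths that each end at a vertex of X_{i,ℓ} and contain no other vertices of X_{i,ℓ}. Then for every such subpath R' other than the singleton subpath {r_{i,ℓ}}, there is a path in P contained entirely within R'. -/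
/-!  Formalization of the "Hitting Paths in a Flower" setting.

A flower graph is a graph with a distinguished core vertex `z` such that every
connected component of `G − z` is a path (a *petal*) no interior vertex of which
is adjacent to `z`.  We represent (up to isomorphism) a flower with `n` petals,
petal `i` having `L i ≥ 1` vertices `r_{i,1}, …, r_{i,L i}`, by the vertex type
`Option (Fin n × ℕ)`: the core `z` is `none`, and `some (i, j)` (for `1 ≤ j ≤ L i`)
is the `j`-th vertex of petal `i`.  Booleans `al i` / `ar i` record whether the
left/right endpoint of petal `i` is adjacent to the core.  Since hitting a path
only depends on its vertex set, paths are recorded by their vertex sets; the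
predicate `IsFlowerPath` characterizes the vertex sets of simple paths of the
flower graph. -/

/-- Vertices of an `n`-petal flower: `none` is the core `z`,
`some (i, j)` is vertex `r_{i,j}` of petal `i`. -/
abbrev FVertex (n : ℕ) := Option (Fin n × ℕ)

/-- The core vertex `z`. -/
def fz {n : ℕ} : FVertex n := none

/-- The vertex `r_{i,j}` of petal `i`. -/
def fv {n : ℕ} (i : Fin n) (j : ℕ) : FVertex n := some (i, j)

/-- The set of vertices of petal `i` with indices in `s`. -/
def petalSeg {n : ℕ} (i : Fin n) (s : Finset ℕ) : Finset (FVertex n) :=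
  s.image (fun j => fv i j)

/-- Index sets of subpaths of petal `i` that can be attached to the core in a simple
path through `z`: the empty set, a prefix `{1, …, c}` whose left endpoint `r_{i,1}`
is adjacent to `z`, or a suffix `{c, …, L i}` whose right endpoint `r_{i,L i}` is
adjacent to `z`. -/
def IsZSeg {n : ℕ} (L : Fin n → ℕ) (al ar : Fin n → Bool) (i : Fin n)
    (s : Finset ℕ) : Prop :=
  s = ∅ ∨
  (al i = true ∧ ∃ c, 1 ≤ c ∧ c ≤ L i ∧ s = Finset.Icc 1 c) ∨
  (ar i = true ∧ ∃ c, 1 ≤ c ∧ c ≤ L i ∧ s = Finset.Icc c (L i))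

/-- `p` is the vertex set of a simple path in the flower graph: either an interval of
one petal, or the core `z` together with (at most) two core-attachable petal segments
which are disjoint if they lie in the same petal. -/
def IsFlowerPath {n : ℕ} (L : Fin n → ℕ) (al ar : Fin n → Bool)
    (p : Finset (FVertex n)) : Prop :=
  (∃ (i : Fin n) (a c : ℕ), 1 ≤ a ∧ a ≤ c ∧ c ≤ L i ∧ p = petalSeg i (Finset.Icc a c)) ∨
  (∃ (i₁ i₂ : Fin n) (s₁ s₂ : Finset ℕ), IsZSeg L al ar i₁ s₁ ∧ IsZSeg L al ar i₂ s₂ ∧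
    (i₁ = i₂ → Disjoint s₁ s₂) ∧ p = insert fz (petalSeg i₁ s₁ ∪ petalSeg i₂ s₂))

/-- An instance `(G, z, P, b)` of Hitting Paths in a Flower: a flower graph with `n`
petals of sizes `L i ≥ 1` (the Booleans `al`, `ar` telling which petal endpoints are
adjacent to the core), a finite set `P` of simple paths in the flower (given by their
vertex sets), and a budget function `b` with `b i ≥ 1`. -/
structure FlowerInstance (n : ℕ) where
  /-- number of vertices of petal `i` -/
  L : Fin n → ℕ
  hL : ∀ i, 1 ≤ L i
  /-- whether the left endpoint `r_{i,1}` of petal `i` is adjacent to the core -/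
  al : Fin n → Bool
  /-- whether the right endpoint `r_{i,L i}` of petal `i` is adjacent to the core -/
  ar : Fin n → Bool
  /-- the set of simple paths to be hit, given by their vertex sets -/
  P : Finset (Finset (FVertex n))
  hP : ∀ p ∈ P, IsFlowerPath L al ar p
  /-- the budget function -/
  b : Fin n → ℕ
  hb : ∀ i, 1 ≤ b i

/-- The (vertex set of) petal `R_i`. -/
def FlowerInstance.petal {n : ℕ} (F : FlowerInstance n) (i : Fin n) :
    Finset (FVertex n) :=
  petalSeg i (Finset.Icc 1 (F.L i))

/-- A solution: a set `X ⊆ V(G) ∖ {z}` that intersects every path of `P` and contains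
exactly `b i` vertices of petal `R_i`, for every `i`. -/
def FlowerInstance.IsSolution {n : ℕ} (F : FlowerInstance n)
    (X : Finset (FVertex n)) : Prop :=
  (∀ x ∈ X, ∃ (i : Fin n) (j : ℕ), 1 ≤ j ∧ j ≤ F.L i ∧ x = fv i j) ∧
  (∀ p ∈ F.P, (X ∩ p).Nonempty) ∧
  (∀ i : Fin n, (X ∩ F.petal i).card = F.b i)

/-- The pairs `(a, c)` with `1 ≤ a ≤ c ≤ L i` such that the interval
`{r_{i,a}, …, r_{i,c}}` of petal `i` is (the vertex set of) a path of `P`;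
these are exactly the paths of `P` contained entirely within petal `R_i`. -/
def FlowerInstance.innerIntervals {n : ℕ} (F : FlowerInstance n) (i : Fin n) :
    Finset (ℕ × ℕ) :=
  ((Finset.Icc 1 (F.L i)) ×ˢ (Finset.Icc 1 (F.L i))).filter
    (fun q => q.1 ≤ q.2 ∧ petalSeg i (Finset.Icc q.1 q.2) ∈ F.P)

/-- The intervals among `I` that are not intersected by `X`. -/
def unhit (I : Finset (ℕ × ℕ)) (X : Finset ℕ) : Finset (ℕ × ℕ) :=
  I.filter (fun q => ∀ j ∈ X, ¬ (q.1 ≤ j ∧ j ≤ q.2))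

/-- Step (2a) of the canonical-solution process: while some interval of `I` is not
intersected by `X`, add the minimum right endpoint of an unhit interval.  The fuel
argument only ensures termination; `I.card` iterations always suffice. -/
def greedyA (I : Finset (ℕ × ℕ)) : ℕ → Finset ℕ → Finset ℕ
  | 0, X => X
  | (fuel + 1), X =>
    if h : (unhit I X).Nonempty then
      greedyA I fuel (insert (((unhit I X).image Prod.snd).min' (h.image _)) X)
    else X

/-- Step (2b) of the canonical-solution process: while `|X| < bdg` and
`Y := Icc lo hi \ X` is nonempty, add the largest element of `Y`.  The fuel
argument only ensures termination; `bdg` iterations always suffice. -/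
def greedyB (lo hi bdg : ℕ) : ℕ → Finset ℕ → Finset ℕ
  | 0, X => X
  | (fuel + 1), X =>
    if h : X.card < bdg ∧ ((Finset.Icc lo hi) \ X).Nonempty then
      greedyB lo hi bdg fuel (insert (((Finset.Icc lo hi) \ X).max' h.2) X)
    else X

/-- The set `X_{i,ℓ}` produced by steps (2), (2a), (2b) of the canonical-solution
process for petal `R_i`, starting from `X_{i,ℓ} = {ℓ}`. -/
def FlowerInstance.canonicalAux {n : ℕ} (F : FlowerInstance n) (i : Fin n) (ℓ : ℕ) :
    Finset ℕ :=
  greedyB ℓ (F.L i) (F.b i) (F.b i)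
    (greedyA (F.innerIntervals i) (F.innerIntervals i).card {ℓ})

/-- The canonical `ℓ`-th solution for petal `R_i` (given by the indices of its
vertices on the petal), or `none` (NIL) if step (1) applies — some path of `P` is
contained within `{r_{i,1}, …, r_{i,ℓ-1}}` — or if the produced set does not have
exactly `b i` elements (step (2c)). -/
def FlowerInstance.canonical {n : ℕ} (F : FlowerInstance n) (i : Fin n) (ℓ : ℕ) :
    Option (Finset ℕ) :=
  if ∃ q ∈ F.innerIntervals i, q.2 < ℓ then none
  else if (F.canonicalAux i ℓ).card = F.b i then some (F.canonicalAux i ℓ) else none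

/-- One can keep, along the greedy process, that unhit intervals lie strictly to the right of the
current set and that every element other than `ℓ` is witnessed by an interval lying strictly to
the right of all smaller elements. -/
theorem exists_interval_of_mem_greedyA {I : Finset (ℕ × ℕ)} (hI : ∀ q ∈ I, q.1 ≤ q.2) (ℓ : ℕ)
    (fuel : ℕ) (X : Finset ℕ) (hright : ∀ q ∈ unhit I X, ∀ j ∈ X, j < q.1)
    (hwit : ∀ x ∈ X, x ≠ ℓ → ∃ q ∈ I, (∀ j ∈ X, j < x → j < q.1) ∧ q.2 ≤ x) :
    ∀ x ∈ greedyA I fuel X, x ≠ ℓ →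
      ∃ q ∈ I, (∀ j ∈ greedyA I fuel X, j < x → j < q.1) ∧ q.2 ≤ x := by
  induction fuel generalizing X with
  | zero => exact hwit
  | succ fuel ih =>
    unfold greedyA
    split_ifs with h
    · have hmem := Finset.min'_mem _ (h.image Prod.snd)
      have hmin : ∀ q ∈ unhit I X, ((unhit I X).image Prod.snd).min' (h.image _) ≤ q.2 :=
        fun q hq => Finset.min'_le _ _ (Finset.mem_image_of_mem _ hq)
      generalize ((unhit I X).image Prod.snd).min' (h.image _) = m at hmem hmin ⊢
      obtain ⟨p, hp, rfl⟩ := Finset.mem_image.1 hmem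
      have hpI : p ∈ I := (Finset.mem_filter.1 hp).1
      have hlt : ∀ j ∈ X, j < p.2 := fun j hj => (hright p hp j hj).trans_le (hI p hpI)
      apply ih
      · intro q hq j hj
        obtain ⟨hqI, hq⟩ := Finset.mem_filter.1 hq
        have hqX : q ∈ unhit I X :=
          Finset.mem_filter.2 ⟨hqI, fun j hj => hq j (Finset.mem_insert_of_mem hj)⟩
        rcases Finset.mem_insert.1 hj with rfl | hj
        · exact not_le.1 fun hle => hq _ (Finset.mem_insert_self _ _) ⟨hle, hmin q hqX⟩
        · exact hright q hqX j hj
      · intro x hx hxℓ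
        rcases Finset.mem_insert.1 hx with rfl | hx
        · refine ⟨p, hpI, fun j hj hjx => ?_, le_rfl⟩
          exact hright p hp j (Finset.mem_of_mem_insert_of_ne hj hjx.ne)
        · obtain ⟨q, hqI, hq, hqx⟩ := hwit x hx hxℓ
          refine ⟨q, hqI, fun j hj hjx => hq j ?_ hjx, hqx⟩
          exact Finset.mem_of_mem_insert_of_ne hj (hjx.trans (hlt x hx)).ne
    · exact hwit

/-- **Observation 2.** Let `X = X_{i,ℓ}` result from the
canonical-solution process for petal `R_i`, assuming step (1) does not apply (no
path of `P` lies within `{r_{i,1}, …, r_{i,ℓ-1}}`) and the loop of step (2b) is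
never executed (its guard fails for the set produced by step (2a)).  Partitioning
`{r_{i,ℓ}, …, r_{i,max X}}` into `|X|` maximal subpaths each ending at a vertex of
`X` and containing no other vertex of `X`, every such subpath other than the
singleton `{r_{i,ℓ}}` entirely contains a path of `P`: for every `x ∈ X` with
`x ≠ ℓ` there is a target interval `(a, c) ∈ innerIntervals` lying strictly to the
right of every element of `X` below `x` and with `c ≤ x`. -/
theorem stmt_3 {n : ℕ} (F : FlowerInstance n) (i : Fin n) (ℓ : ℕ)
    (hℓ1 : 1 ≤ ℓ) (hℓ2 : ℓ ≤ F.L i)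
    (hstep1 : ∀ q ∈ F.innerIntervals i, ¬ q.2 < ℓ)
    (X : Finset ℕ)
    (hX : X = greedyA (F.innerIntervals i) (F.innerIntervals i).card {ℓ})
    (hstep2b : ¬ (X.card < F.b i ∧ ((Finset.Icc ℓ (F.L i)) \ X).Nonempty)) :
    ∀ x ∈ X, x ≠ ℓ →
      ∃ q ∈ F.innerIntervals i, (∀ j ∈ X, j < x → j < q.1) ∧ q.2 ≤ x := by
  subst hX
  refine exists_interval_of_mem_greedyA (fun q hq => (Finset.mem_filter.1 hq).2.1) ℓ _ _ ?_ ?_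
  · intro q hq j hj
    obtain rfl := Finset.mem_singleton.1 hj
    obtain ⟨hqI, hq⟩ := Finset.mem_filter.1 hq
    exact not_le.1 fun hle => hq j hj ⟨hle, not_lt.1 (hstep1 q hqI)⟩
  · intro x hx hxℓ
    exact absurd (Finset.mem_singleton.1 hx) hxℓ
end

section
/- Let (G, z, P, b) be an instance of Hitting Paths in a Flower and let R_i be a petal. Then the set of indices ℓ with 1 ≤ ℓ ≤ |V(R_i)| for which the canonical ℓ-th solution for R_i is well defined forms a contiguous set of integers; that is, if ℓ_1 < ℓ_2 < ℓ_3 and the canonical ℓ_1-th and ℓ_3-th solutions are well defined, then so is the canonical ℓ_2-th solution. -/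
theorem mem_unhit {I : Finset (ℕ × ℕ)} {X : Finset ℕ} {q : ℕ × ℕ} :
    q ∈ unhit I X ↔ q ∈ I ∧ ∀ j ∈ X, ¬ (q.1 ≤ j ∧ j ≤ q.2) := by
  simp [unhit]

theorem subset_greedyA (I : Finset (ℕ × ℕ)) (fuel : ℕ) (X : Finset ℕ) :
    X ⊆ greedyA I fuel X := by
  induction fuel generalizing X with
  | zero => simp [greedyA]
  | succ k ih =>
    rw [greedyA]
    split_ifs
    · exact (Finset.subset_insert _ _).trans (ih _)
    · exact Finset.Subset.refl _

theorem greedyA_subset {I : Finset (ℕ × ℕ)} {S : Finset ℕ} (hI : ∀ q ∈ I, q.2 ∈ S)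
    (fuel : ℕ) {X : Finset ℕ} (hX : X ⊆ S) : greedyA I fuel X ⊆ S := by
  induction fuel generalizing X with
  | zero => simpa [greedyA]
  | succ k ih =>
    rw [greedyA]
    split_ifs with h
    · refine ih (Finset.insert_subset ?_ hX)
      obtain ⟨q, hq, he⟩ := Finset.mem_image.mp
        (((unhit I X).image Prod.snd).min'_mem (h.image _))
      rw [← he]
      exact hI q (mem_unhit.mp hq).1
    · exact hX

theorem subset_greedyB (lo hi bdg fuel : ℕ) (X : Finset ℕ) :
    X ⊆ greedyB lo hi bdg fuel X := by
  induction fuel generalizing X with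
  | zero => simp [greedyB]
  | succ k ih =>
    rw [greedyB]
    split_ifs
    · exact (Finset.subset_insert _ _).trans (ih _)
    · exact Finset.Subset.refl _

theorem greedyB_subset {lo hi : ℕ} (bdg fuel : ℕ) {X : Finset ℕ}
    (hX : X ⊆ Finset.Icc lo hi) : greedyB lo hi bdg fuel X ⊆ Finset.Icc lo hi := by
  induction fuel generalizing X with
  | zero => simpa [greedyB]
  | succ k ih =>
    rw [greedyB]
    split_ifs with h
    · exact ih (Finset.insert_subset
        (Finset.mem_sdiff.mp (Finset.max'_mem _ h.2)).1 hX)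
    · exact hX

theorem card_greedyB_eq {lo hi bdg fuel : ℕ} {X : Finset ℕ} (hX : X.card ≤ bdg)
    (hbdg : bdg ≤ (Finset.Icc lo hi).card) (hfuel : bdg ≤ X.card + fuel) :
    (greedyB lo hi bdg fuel X).card = bdg := by
  induction fuel generalizing X with
  | zero => rw [greedyB]; omega
  | succ k ih =>
    rw [greedyB]
    split_ifs with h
    · have hc := Finset.card_insert_of_notMem
        (Finset.mem_sdiff.mp (Finset.max'_mem _ h.2)).2
      exact ih (by omega) (by omega)
    · by_contra hne
      have hlt : X.card < bdg := by omega
      exact h ⟨hlt, Finset.sdiff_nonempty_of_card_lt_card (hlt.trans_le hbdg)⟩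

/-- Adding the smallest right endpoint of an unhit interval preserves the property that the
unhit intervals are those lying strictly to the right of a given point. -/
theorem mem_unhit_insert_min_iff {I : Finset (ℕ × ℕ)} (hI : ∀ q ∈ I, q.1 ≤ q.2)
    {X : Finset ℕ} {x : ℕ} (hX : ∀ q, q ∈ unhit I X ↔ q ∈ I ∧ x < q.1)
    (h : ((unhit I X).image Prod.snd).Nonempty) (q : ℕ × ℕ) :
    q ∈ unhit I (insert (((unhit I X).image Prod.snd).min' h) X) ↔
      q ∈ I ∧ ((unhit I X).image Prod.snd).min' h < q.1 := by
  obtain ⟨r, hr, he⟩ := Finset.mem_image.mp (Finset.min'_mem _ h)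
  have hmin : ∀ p ∈ unhit I X, ((unhit I X).image Prod.snd).min' h ≤ p.2 := fun p hp =>
    Finset.min'_le _ _ (Finset.mem_image_of_mem _ hp)
  generalize ((unhit I X).image Prod.snd).min' h = m at *
  have hrx := (hX r).mp hr
  have hrI := hI r hrx.1
  have hsplit : q ∈ unhit I (insert m X) ↔ q ∈ unhit I X ∧ ¬ (q.1 ≤ m ∧ m ≤ q.2) := by
    simp only [mem_unhit, Finset.forall_mem_insert]
    tauto
  rw [hsplit]
  constructor
  · rintro ⟨hq, hm⟩
    have := hmin q hq
    exact ⟨((hX q).mp hq).1, by omega⟩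
  · rintro ⟨hq, hm⟩
    exact ⟨(hX q).mpr ⟨hq, by omega⟩, by omega⟩

theorem min_unhit_notMem {I : Finset (ℕ × ℕ)} (hI : ∀ q ∈ I, q.1 ≤ q.2) {X : Finset ℕ}
    (h : ((unhit I X).image Prod.snd).Nonempty) :
    ((unhit I X).image Prod.snd).min' h ∉ X := by
  obtain ⟨r, hr, he⟩ := Finset.mem_image.mp (Finset.min'_mem _ h)
  rw [← he]
  intro hmem
  have hr' := mem_unhit.mp hr
  exact hr'.2 _ hmem ⟨hI r hr'.1, le_rfl⟩

/-- The number of vertices selected by the greedy procedure is antitone in the point to the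
right of which all intervals remain to be hit. -/
theorem card_greedyA_le_card_greedyA {I : Finset (ℕ × ℕ)} (hI : ∀ q ∈ I, q.1 ≤ q.2)
    (fuel : ℕ) {X Y : Finset ℕ} {x y : ℕ} (hxy : x ≤ y) (hcard : Y.card ≤ X.card)
    (hX : ∀ q, q ∈ unhit I X ↔ q ∈ I ∧ x < q.1)
    (hY : ∀ q, q ∈ unhit I Y ↔ q ∈ I ∧ y < q.1) :
    (greedyA I fuel Y).card ≤ (greedyA I fuel X).card := by
  induction fuel generalizing X Y x y with
  | zero => simpa [greedyA]
  | succ k ih =>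
    by_cases hYne : (unhit I Y).Nonempty
    · have hsub : unhit I Y ⊆ unhit I X := fun q hq =>
        (hX q).mpr ⟨((hY q).mp hq).1, hxy.trans_lt ((hY q).mp hq).2⟩
      have hXne := hYne.mono hsub
      rw [greedyA, greedyA, dif_pos hYne, dif_pos hXne]
      refine ih (Finset.min'_subset _ (Finset.image_subset_image hsub)) ?_
        (mem_unhit_insert_min_iff hI hX (hXne.image _))
        (mem_unhit_insert_min_iff hI hY (hYne.image _))
      rw [Finset.card_insert_of_notMem (min_unhit_notMem hI (hXne.image _)),
        Finset.card_insert_of_notMem (min_unhit_notMem hI (hYne.image _))]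
      omega
    · rw [greedyA, dif_neg hYne]
      exact hcard.trans (Finset.card_le_card (subset_greedyA _ _ _))

theorem mem_unhit_singleton_iff {I : Finset (ℕ × ℕ)} {ℓ : ℕ} (hI : ∀ q ∈ I, ℓ ≤ q.2)
    (q : ℕ × ℕ) : q ∈ unhit I {ℓ} ↔ q ∈ I ∧ ℓ < q.1 := by
  rw [mem_unhit]
  refine and_congr_right fun hq => ?_
  have := hI q hq
  simp only [Finset.mem_singleton, forall_eq]
  omega

theorem FlowerInstance.isSome_canonical_iff {n : ℕ} (F : FlowerInstance n) (i : Fin n)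
    (ℓ : ℕ) : (F.canonical i ℓ).isSome ↔
      (∀ q ∈ F.innerIntervals i, ℓ ≤ q.2) ∧ (F.canonicalAux i ℓ).card = F.b i := by
  unfold FlowerInstance.canonical
  split_ifs with h h' <;> simp_all
  exact h

theorem FlowerInstance.mem_innerIntervals_bounds {n : ℕ} (F : FlowerInstance n) (i : Fin n)
    {q : ℕ × ℕ} (hq : q ∈ F.innerIntervals i) : q.1 ≤ q.2 ∧ q.2 ≤ F.L i := by
  simp only [FlowerInstance.innerIntervals, Finset.mem_filter, Finset.mem_product,
    Finset.mem_Icc] at hq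
  exact ⟨hq.2.1, hq.1.2.2⟩

/-- **Lemma: contiguity.** The indices `ℓ` for which petal `R_i` has a
well-defined canonical `ℓ`-th solution form a contiguous set of integers: if
`ℓ₁ < ℓ₂ < ℓ₃` and the canonical `ℓ₁`-th and `ℓ₃`-th solutions are well defined,
then so is the canonical `ℓ₂`-th solution. -/
theorem stmt_4 {n : ℕ} (F : FlowerInstance n) (i : Fin n) (ℓ₁ ℓ₂ ℓ₃ : ℕ)
    (h1 : 1 ≤ ℓ₁) (h12 : ℓ₁ < ℓ₂) (h23 : ℓ₂ < ℓ₃) (h3 : ℓ₃ ≤ F.L i)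
    (hw1 : (F.canonical i ℓ₁).isSome) (hw3 : (F.canonical i ℓ₃).isSome) :
    (F.canonical i ℓ₂).isSome := by
  rw [FlowerInstance.isSome_canonical_iff] at hw1 hw3 ⊢
  obtain ⟨hend1, hcard1⟩ := hw1
  obtain ⟨hend3, hcard3⟩ := hw3
  have hend2 : ∀ q ∈ F.innerIntervals i, ℓ₂ ≤ q.2 := fun q hq => h23.le.trans (hend3 q hq)
  refine ⟨hend2, card_greedyB_eq ?_ ?_ (by omega)⟩
  · calc _ ≤ _ := card_greedyA_le_card_greedyA
          (fun q hq => (F.mem_innerIntervals_bounds i hq).1) _ h12.le (by simp)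
          (mem_unhit_singleton_iff hend1) (mem_unhit_singleton_iff hend2)
      _ ≤ _ := Finset.card_le_card (subset_greedyB ℓ₁ (F.L i) (F.b i) (F.b i) _)
      _ = F.b i := hcard1
  · have hsub : F.canonicalAux i ℓ₃ ⊆ Finset.Icc ℓ₃ (F.L i) :=
      greedyB_subset _ _ (greedyA_subset
        (fun q hq => Finset.mem_Icc.mpr ⟨hend3 q hq, (F.mem_innerIntervals_bounds i hq).2⟩) _
        (by simpa using h3))
    rw [← hcard3]
    exact Finset.card_le_card (hsub.trans (Finset.Icc_subset_Icc_left h23.le))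
end

section
/- Let (G, z, P, b) be an instance of Hitting Paths in a Flower and let R_i be a petal. If ℓ_1 < ℓ_2 and the canonical ℓ_1-th and ℓ_2-th solutions for R_i are well defined as X_{i,ℓ_1} and X_{i,ℓ_2}, then max(X_{i,ℓ_1}) ≤ max(X_{i,ℓ_2}). -/
theorem unhit_insert_subset (I : Finset (ℕ × ℕ)) (X : Finset ℕ) (c : ℕ) :
    unhit I (insert c X) ⊆ unhit I X := fun q hq => by
  rw [mem_unhit] at hq ⊢
  exact ⟨hq.1, fun j hj => hq.2 j (Finset.mem_insert_of_mem hj)⟩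

/-- The vertex added by a step of `greedyA` is the right endpoint of an unhit interval, and
no unhit interval ends before it. -/
theorem exists_unhit_snd_eq_min' {I : Finset (ℕ × ℕ)} {X : Finset ℕ}
    (h : (unhit I X).Nonempty) :
    ∃ q ∈ unhit I X, q.2 = ((unhit I X).image Prod.snd).min' (h.image _) ∧
      ∀ q' ∈ unhit I X, q.2 ≤ q'.2 := by
  obtain ⟨q, hq, hqc⟩ := Finset.mem_image.1 (Finset.min'_mem _ (h.image Prod.snd))
  refine ⟨q, hq, hqc, fun q' hq' => ?_⟩
  rw [hqc]
  exact Finset.min'_le _ _ (Finset.mem_image_of_mem _ hq')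

theorem le_of_mem_greedyA {I : Finset (ℕ × ℕ)} {N : ℕ} (hI : ∀ q ∈ I, q.2 ≤ N)
    {fuel : ℕ} {X : Finset ℕ} (hX : ∀ x ∈ X, x ≤ N) : ∀ x ∈ greedyA I fuel X, x ≤ N := by
  induction fuel generalizing X with
  | zero => exact hX
  | succ k ih =>
    rw [greedyA]
    split_ifs with h
    · obtain ⟨q, hq, hqc, -⟩ := exists_unhit_snd_eq_min' h
      rw [← hqc]
      refine ih fun x hx => ?_
      rcases Finset.mem_insert.1 hx with rfl | hx
      · exact hI q (mem_unhit.1 hq).1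
      · exact hX x hx
    · exact hX

theorem unhit_greedyA_eq_empty {I : Finset (ℕ × ℕ)} (hI : ∀ q ∈ I, q.1 ≤ q.2)
    {fuel : ℕ} {X : Finset ℕ} (hfuel : (unhit I X).card ≤ fuel) :
    unhit I (greedyA I fuel X) = ∅ := by
  induction fuel generalizing X with
  | zero => exact Finset.card_eq_zero.1 (Nat.le_zero.1 hfuel)
  | succ k ih =>
    rw [greedyA]
    split_ifs with h
    · obtain ⟨q, hq, hqc, -⟩ := exists_unhit_snd_eq_min' h
      rw [← hqc]
      have hlt : (unhit I (insert q.2 X)).card < (unhit I X).card :=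
        Finset.card_lt_card ((unhit_insert_subset I X q.2).ssubset_of_mem_notMem hq fun hq' =>
          (mem_unhit.1 hq').2 q.2 (Finset.mem_insert_self _ _)
            ⟨hI q (mem_unhit.1 hq).1, le_rfl⟩)
      exact ih (by omega)
    · exact Finset.not_nonempty_iff_eq_empty.1 h

/-- Optimality of the greedy process: suppose `ℓ ≤ M ∈ X`, every interval not hit by `X` starts
after `M`, and `X` has at most one element more than the part up to `M` of any `S` hitting all
intervals within `(ℓ, M]`.  Then the result of the process has the same property for some
element in place of `M`. -/
theorem card_greedyA_le {I : Finset (ℕ × ℕ)} (hI : ∀ q ∈ I, q.1 ≤ q.2)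
    {S : Finset ℕ} {ℓ M fuel : ℕ} {X : Finset ℕ} (hℓM : ℓ ≤ M) (hM : M ∈ X)
    (hunhit : ∀ q ∈ unhit I X, M < q.1)
    (hcard : (∀ q ∈ I, ℓ < q.1 → q.2 ≤ M → ∃ j ∈ S, q.1 ≤ j ∧ j ≤ q.2) →
      X.card ≤ (S.filter (· ≤ M)).card + 1) :
    ∃ M' ∈ greedyA I fuel X, ℓ ≤ M' ∧
      ((∀ q ∈ I, ℓ < q.1 → q.2 ≤ M' → ∃ j ∈ S, q.1 ≤ j ∧ j ≤ q.2) →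
        (greedyA I fuel X).card ≤ (S.filter (· ≤ M')).card + 1) := by
  induction fuel generalizing X M with
  | zero => exact ⟨M, hM, hℓM, hcard⟩
  | succ k ih =>
    rw [greedyA]
    split_ifs with h
    · obtain ⟨q, hq, hqc, hqmin⟩ := exists_unhit_snd_eq_min' h
      rw [← hqc]
      have hqI := (mem_unhit.1 hq).1
      have hMq := hunhit q hq
      have hq12 := hI q hqI
      refine ih (M := q.2) (by omega) (Finset.mem_insert_self _ _) (fun q' hq' => ?_)
        fun hS => ?_
      · have hle := hqmin q' (unhit_insert_subset _ _ _ hq')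
        have hnot := (mem_unhit.1 hq').2 q.2 (Finset.mem_insert_self _ _)
        omega
      · obtain ⟨j, hjS, hqj, hjq⟩ := hS q hqI (by omega) le_rfl
        have hX := hcard fun q' hq' hℓ hq'M => hS q' hq' hℓ (by omega)
        have hlt : (S.filter (· ≤ M)).card < (S.filter (· ≤ q.2)).card := by
          refine Finset.card_lt_card (Finset.ssubset_iff_of_subset (fun x hx => ?_) |>.2
            ⟨j, ?_, ?_⟩)
          · rw [Finset.mem_filter] at hx ⊢
            exact ⟨hx.1, by omega⟩
          · exact Finset.mem_filter.2 ⟨hjS, hjq⟩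
          · rw [Finset.mem_filter]
            omega
        have := Finset.card_insert_le q.2 X
        omega
    · exact ⟨M, hM, hℓM, hcard⟩

theorem le_of_mem_greedyB {lo hi bdg fuel : ℕ} {X : Finset ℕ} (hX : ∀ x ∈ X, x ≤ hi) :
    ∀ x ∈ greedyB lo hi bdg fuel X, x ≤ hi := by
  induction fuel generalizing X with
  | zero => exact hX
  | succ k ih =>
    rw [greedyB]
    split_ifs with h
    · refine ih fun x hx => ?_
      rcases Finset.mem_insert.1 hx with rfl | hx
      · exact (Finset.mem_Icc.1 (Finset.mem_sdiff.1 (Finset.max'_mem _ h.2)).1).2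
      · exact hX x hx
    · exact hX

theorem greedyB_eq_self {lo hi bdg : ℕ} (fuel : ℕ) {X : Finset ℕ} (hX : bdg ≤ X.card) :
    greedyB lo hi bdg fuel X = X := by
  cases fuel with
  | zero => rfl
  | succ k => rw [greedyB, dif_neg fun h => by omega]

theorem hi_mem_greedyB {lo hi bdg fuel : ℕ} {X : Finset ℕ} (hlo : lo ≤ hi) (hfuel : 0 < fuel)
    (hX : X.card < bdg) : hi ∈ greedyB lo hi bdg fuel X := by
  by_cases hmem : hi ∈ X
  · exact subset_greedyB _ _ _ _ _ hmem
  · obtain ⟨k, rfl⟩ := Nat.exists_eq_succ_of_ne_zero hfuel.ne'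
    have hY : hi ∈ Finset.Icc lo hi \ X :=
      Finset.mem_sdiff.2 ⟨Finset.mem_Icc.2 ⟨hlo, le_rfl⟩, hmem⟩
    rw [greedyB, dif_pos ⟨hX, hi, hY⟩]
    refine subset_greedyB _ _ _ _ _ (Finset.mem_insert.2 (Or.inl ?_))
    exact le_antisymm (Finset.le_max' _ _ hY)
      (Finset.mem_Icc.1 (Finset.mem_sdiff.1 (Finset.max'_mem _ _)).1).2

namespace FlowerInstance

variable {n : ℕ} {F : FlowerInstance n} {i : Fin n} {ℓ : ℕ}

theorem fst_le_snd_of_mem_innerIntervals {q : ℕ × ℕ} (hq : q ∈ F.innerIntervals i) :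
    q.1 ≤ q.2 :=
  (Finset.mem_filter.1 hq).2.1

theorem snd_le_of_mem_innerIntervals {q : ℕ × ℕ} (hq : q ∈ F.innerIntervals i) :
    q.2 ≤ F.L i :=
  (Finset.mem_Icc.1 (Finset.mem_product.1 (Finset.mem_filter.1 hq).1).2).2

theorem canonical_eq_some_iff {X : Finset ℕ} :
    F.canonical i ℓ = some X ↔ (∀ q ∈ F.innerIntervals i, ℓ ≤ q.2) ∧
      F.canonicalAux i ℓ = X ∧ X.card = F.b i := by
  unfold canonical
  split_ifs with h h'
  · obtain ⟨q, hq, hlt⟩ := h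
    exact iff_of_false (by simp) fun H => absurd (H.1 q hq) (by omega)
  · push Not at h
    rw [Option.some_inj]
    exact ⟨fun H => ⟨h, H, H ▸ h'⟩, fun H => H.2.1⟩
  · exact iff_of_false (by simp) fun H => h' (H.2.1 ▸ H.2.2)

theorem self_mem_canonicalAux : ℓ ∈ F.canonicalAux i ℓ :=
  subset_greedyB _ _ _ _ _ (subset_greedyA _ _ _ (Finset.mem_singleton_self ℓ))

theorem le_of_mem_canonicalAux (hℓ : ℓ ≤ F.L i) {x : ℕ} (hx : x ∈ F.canonicalAux i ℓ) :
    x ≤ F.L i :=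
  le_of_mem_greedyB (le_of_mem_greedyA (fun _ hq => snd_le_of_mem_innerIntervals hq)
    fun _ hy => (Finset.mem_singleton.1 hy).trans_le hℓ) x hx

/-- The canonical set hits every path within the petal. -/
theorem exists_mem_canonicalAux {q : ℕ × ℕ} (hq : q ∈ F.innerIntervals i) :
    ∃ j ∈ F.canonicalAux i ℓ, q.1 ≤ j ∧ j ≤ q.2 := by
  by_contra! hno
  have hempty := unhit_greedyA_eq_empty (I := F.innerIntervals i) (X := {ℓ})
    (fun _ => fst_le_snd_of_mem_innerIntervals) (Finset.card_le_card (Finset.filter_subset _ _))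
  refine Finset.notMem_empty q (hempty ▸ mem_unhit.2 ⟨hq, fun j hj hjq => ?_⟩)
  have := hno j (subset_greedyB _ _ _ _ _ hj) hjq.1
  omega

end FlowerInstance

/-- **Lemma: later solutions reach further.** If `ℓ₁ < ℓ₂` and the
canonical `ℓ₁`-th and `ℓ₂`-th solutions for petal `R_i` are well defined as
`X₁` and `X₂`, then `max X₁ ≤ max X₂`. -/
theorem stmt_5 {n : ℕ} (F : FlowerInstance n) (i : Fin n) (ℓ₁ ℓ₂ : ℕ)
    (h1 : 1 ≤ ℓ₁) (h12 : ℓ₁ < ℓ₂) (h2 : ℓ₂ ≤ F.L i) (X₁ X₂ : Finset ℕ)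
    (hX₁ : F.canonical i ℓ₁ = some X₁) (hX₂ : F.canonical i ℓ₂ = some X₂) :
    X₁.max ≤ X₂.max := by
  obtain ⟨-, rfl, hcard₁⟩ := FlowerInstance.canonical_eq_some_iff.1 hX₁
  obtain ⟨hleft, rfl, hcard₂⟩ := FlowerInstance.canonical_eq_some_iff.1 hX₂
  refine Finset.max_le fun m hm => ?_
  suffices h : ∃ y ∈ F.canonicalAux i ℓ₂, m ≤ y by
    obtain ⟨y, hy, hmy⟩ := h
    exact (WithBot.coe_le_coe.2 hmy).trans (Finset.le_max hy)
  rcases lt_or_ge (greedyA (F.innerIntervals i) (F.innerIntervals i).card {ℓ₂}).card (F.b i)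
    with hlt | hge
  · exact ⟨F.L i, hi_mem_greedyB h2 (F.hb i) hlt,
      FlowerInstance.le_of_mem_canonicalAux (h12.le.trans h2) hm⟩
  · have heq : F.canonicalAux i ℓ₂ =
        greedyA (F.innerIntervals i) (F.innerIntervals i).card {ℓ₂} := greedyB_eq_self _ hge
    obtain ⟨M, hM, hℓM, hbound⟩ := card_greedyA_le (I := F.innerIntervals i)
      (S := ((F.canonicalAux i ℓ₁).erase ℓ₁).erase m) (ℓ := ℓ₂) (M := ℓ₂)
      (fuel := (F.innerIntervals i).card) (X := {ℓ₂})
      (fun _ => FlowerInstance.fst_le_snd_of_mem_innerIntervals) le_rfl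
      (Finset.mem_singleton_self _)
      (fun q hq => by
        have hle := hleft q (mem_unhit.1 hq).1
        have hnot := (mem_unhit.1 hq).2 ℓ₂ (Finset.mem_singleton_self _)
        omega)
      (fun _ => by simp)
    rw [heq]
    refine ⟨M, hM, ?_⟩
    by_contra! hMm
    have hA := hbound fun q hq hℓq hqM => by
      obtain ⟨j, hj, hqj, hjq⟩ := FlowerInstance.exists_mem_canonicalAux (ℓ := ℓ₁) hq
      exact ⟨j, Finset.mem_erase.2 ⟨by omega, Finset.mem_erase.2 ⟨by omega, hj⟩⟩, hqj, hjq⟩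
    have hfilter := hA.trans (Nat.succ_le_succ (Finset.card_filter_le _ _))
    have hm' : m ∈ (F.canonicalAux i ℓ₁).erase ℓ₁ := Finset.mem_erase.2 ⟨by omega, hm⟩
    have hS := Finset.card_erase_add_one hm'
    have hS' := Finset.card_erase_add_one
      (FlowerInstance.self_mem_canonicalAux (F := F) (i := i) (ℓ := ℓ₁))
    omega
end

section
/- Let G be a finite simple graph, let P be a set of simple paths in G, let t be an integer, and let v be a vertex of G of degree at most one. (1) If the singleton path {v} belongs to P, then there is a set of at most t vertices of G intersecting every path in P if and only if there is a set of at most t − 1 vertices of G − v intersecting every path in P that does not contain v. (2) If the singleton path {v} does not belong to P, then there is a set of at most t vertices of G intersecting every path in P if and only if there is a set of at most t vertices of G − v intersecting, for every path Q in P, the path Q with the vertex v removed. -/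
/-- A walk visiting `v` either also visits a neighbour of `v`, or is the trivial walk at `v`. -/
theorem SimpleGraph.Walk.exists_adj_mem_support_or_eq_nil {V : Type*} {G : SimpleGraph V}
    {a b v : V} (p : G.Walk a b) (hv : v ∈ p.support) :
    (∃ w ∈ p.support, G.Adj v w) ∨
      (⟨a, b, p⟩ : Σ u v : V, G.Walk u v) = ⟨v, v, SimpleGraph.Walk.nil⟩ := by
  induction p with
  | nil =>
    rw [SimpleGraph.Walk.mem_support_nil_iff] at hv
    subst hv
    exact Or.inr rfl
  | @cons a c b h q ih =>
    rw [SimpleGraph.Walk.support_cons, List.mem_cons] at hv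
    left
    rcases hv with rfl | hv
    · exact ⟨c, by simp, h⟩
    · rcases ih hv with ⟨w, hw, hvw⟩ | hq
      · exact ⟨w, by simp [hw], hvw⟩
      · obtain rfl : c = v := congrArg Sigma.fst hq
        exact ⟨a, by simp, h.symm⟩

/-- Let `G` be a finite simple graph, `P` a set of simple paths in
`G`, `t` an integer, and `v` a vertex of degree at most one.
(1) If the singleton path `{v}` belongs to `P`, then there is a set of at most `t`
vertices of `G` intersecting every path of `P` iff there is a set of at most `t - 1`
vertices of `G − v` intersecting every path of `P` that does not contain `v`.
(2) If the singleton path `{v}` does not belong to `P`, then there is a set of at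
most `t` vertices of `G` intersecting every path of `P` iff there is a set of at
most `t` vertices of `G − v` intersecting, for every path `Q ∈ P`, the path `Q`
with the vertex `v` removed (i.e. meeting `Q` in a vertex other than `v`). -/
theorem stmt_10 {V : Type} [Fintype V] [DecidableEq V] (G : SimpleGraph V)
    [DecidableRel G.Adj]
    (P : Set (Σ u v : V, G.Walk u v)) (hP : ∀ p ∈ P, p.2.2.IsPath)
    (t : ℤ) (v : V) (hv : G.degree v ≤ 1) :
    ((⟨v, v, SimpleGraph.Walk.nil⟩ : Σ u v : V, G.Walk u v) ∈ P →
      ((∃ X : Finset V, (X.card : ℤ) ≤ t ∧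
          ∀ p ∈ P, ∃ x ∈ X, x ∈ p.2.2.support) ↔
        (∃ X : Finset V, (X.card : ℤ) ≤ t - 1 ∧ v ∉ X ∧
          ∀ p ∈ P, v ∉ p.2.2.support → ∃ x ∈ X, x ∈ p.2.2.support))) ∧
    ((⟨v, v, SimpleGraph.Walk.nil⟩ : Σ u v : V, G.Walk u v) ∉ P →
      ((∃ X : Finset V, (X.card : ℤ) ≤ t ∧
          ∀ p ∈ P, ∃ x ∈ X, x ∈ p.2.2.support) ↔
        (∃ X : Finset V, (X.card : ℤ) ≤ t ∧ v ∉ X ∧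
          ∀ p ∈ P, ∃ x ∈ X, x ∈ p.2.2.support ∧ x ≠ v))) := by
  refine ⟨fun hmem => ⟨?_, ?_⟩, fun hnmem => ⟨?_, ?_⟩⟩
  · rintro ⟨X, hcard, hX⟩
    have hvX : v ∈ X := by
      obtain ⟨x, hxX, hx⟩ := hX _ hmem
      rwa [SimpleGraph.Walk.mem_support_nil_iff.mp hx] at hxX
    refine ⟨X.erase v, ?_, Finset.notMem_erase v X, fun p hp hvp => ?_⟩
    · have := Finset.card_erase_add_one hvX
      lia
    · obtain ⟨x, hxX, hx⟩ := hX p hp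
      exact ⟨x, Finset.mem_erase.mpr ⟨fun h => hvp (h ▸ hx), hxX⟩, hx⟩
  · rintro ⟨X, hcard, hvX, hX⟩
    refine ⟨insert v X, ?_, fun p hp => ?_⟩
    · rw [Finset.card_insert_of_notMem hvX]
      lia
    · by_cases hvp : v ∈ p.2.2.support
      · exact ⟨v, Finset.mem_insert_self v X, hvp⟩
      · obtain ⟨x, hxX, hx⟩ := hX p hp hvp
        exact ⟨x, Finset.mem_insert_of_mem hxX, hx⟩
  · rintro ⟨X, hcard, hX⟩
    by_cases hvX : v ∈ X
    · refine ⟨X.erase v ∪ G.neighborFinset v, ?_, by simp, fun p hp => ?_⟩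
      · have h₁ := Finset.card_erase_add_one hvX
        have h₂ := Finset.card_union_le (X.erase v) (G.neighborFinset v)
        rw [G.card_neighborFinset_eq_degree] at h₂
        lia
      · by_cases hvp : v ∈ p.2.2.support
        · rcases p.2.2.exists_adj_mem_support_or_eq_nil hvp with ⟨w, hw, hvw⟩ | h
          · exact ⟨w, by simp [hvw], hw, hvw.ne'⟩
          · exact absurd (h ▸ hp) hnmem
        · obtain ⟨x, hxX, hx⟩ := hX p hp
          have hxv : x ≠ v := fun h => hvp (h ▸ hx)
          exact ⟨x, by simp [hxv, hxX], hx, hxv⟩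
    · refine ⟨X, hcard, hvX, fun p hp => ?_⟩
      obtain ⟨x, hxX, hx⟩ := hX p hp
      exact ⟨x, hxX, hx, fun h => hvX (h ▸ hxX)⟩
  · rintro ⟨X, hcard, -, hX⟩
    refine ⟨X, hcard, fun p hp => ?_⟩
    obtain ⟨x, hxX, hx, -⟩ := hX p hp
    exact ⟨x, hxX, hx⟩
end

section
/- Let G be a finite simple graph, let P be a set of simple paths in G, and let S be the set of vertices of G whose degree is not equal to two. For a vertex set C, let opt(C) denote the minimum cardinality of a set of vertices intersecting every path of P whose vertex set is contained in C. Then there is a minimum-cardinality set X of vertices of G intersecting every path in P such that for every connected component C of G − S, opt(V(C)) ≤ |X ∩ V(C)| ≤ opt(V(C)) + 1. -/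
/-- `hsOpt G P C` is `opt(C)`: the minimum cardinality of a set of vertices
intersecting every path of `P` whose vertex set is contained in `C`. -/
noncomputable def hsOpt {V : Type} [Fintype V] (G : SimpleGraph V)
    (P : Set (Σ u v : V, G.Walk u v)) (C : Set V) : ℕ :=
  sInf {m : ℕ | ∃ Y : Finset V, Y.card = m ∧
    ∀ p ∈ P, (∀ x ∈ p.2.2.support, x ∈ C) → ∃ x ∈ Y, x ∈ p.2.2.support}

/-- The set of vertices of `G` lying in the connected component `C` of the induced
subgraph of `G` on `s`. -/
def inducedCompSet {V : Type} (G : SimpleGraph V) (s : Set V)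
    (C : (G.induce s).ConnectedComponent) : Set V :=
  {v : V | ∃ h : v ∈ s, (G.induce s).connectedComponentMk ⟨v, h⟩ = C}

/-- The vertices outside `K` with a neighbor in `K`. -/
def outerBoundary {V : Type} (G : SimpleGraph V) (K : Set V) : Set V :=
  {w | w ∉ K ∧ ∃ v ∈ K, G.Adj v w}

/-- A connected set of vertices of degree two has at most two outer neighbors. -/
theorem ncard_outerBoundary_le_two {V : Type} [Fintype V] [DecidableEq V] (G : SimpleGraph V)
    [DecidableRel G.Adj] (K : Set V) (hK : (G.induce K).Connected)
    (hdeg : ∀ v ∈ K, G.degree v = 2) : (outerBoundary G K).ncard ≤ 2 := by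
  classical
  have hsub : outerBoundary G K ⊆
      ↑((Finset.univ : Finset K).biUnion fun v => G.neighborFinset v \ K.toFinset) := by
    rintro w ⟨hw, v, hv, hvw⟩
    simp only [Finset.coe_biUnion, Set.mem_iUnion]
    exact ⟨⟨v, hv⟩, by simp, by simp [hw, hvw]⟩
  have hcard : (outerBoundary G K).ncard ≤ ∑ v : K, (G.neighborFinset v \ K.toFinset).card :=
    (Set.ncard_le_ncard hsub (Finset.finite_toSet _)).trans
      ((Set.ncard_coe_finset _).le.trans Finset.card_biUnion_le)
  have hsplit (v : K) :
      (G.neighborFinset v \ K.toFinset).card + (G.induce K).degree v = 2 := by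
    rw [← hdeg v v.2, ← G.card_neighborFinset_eq_degree,
      ← SimpleGraph.card_neighborFinset_eq_degree,
      ← Finset.card_map (Function.Embedding.subtype (· ∈ K)),
      ← Finset.card_sdiff_add_card_inter (G.neighborFinset v) K.toFinset]
    congr 2
    ext w
    simp
  have hsum := Finset.sum_congr (rfl : (Finset.univ : Finset K) = _) fun v _ => hsplit v
  rw [Finset.sum_add_distrib, SimpleGraph.sum_degrees_eq_twice_card_edges] at hsum
  have hedge := hK.card_vert_le_card_edgeSet_add_one
  rw [Nat.card_eq_fintype_card, Nat.card_eq_fintype_card, ← SimpleGraph.edgeFinset_card] at hedge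
  rw [Finset.sum_const, smul_eq_mul, Finset.card_univ] at hsum
  omega

theorem connected_induce_inducedCompSet {V : Type} (G : SimpleGraph V) (s : Set V)
    (C : (G.induce s).ConnectedComponent) : (G.induce (inducedCompSet G s C)).Connected := by
  let f : C.toSimpleGraph →g G.induce (inducedCompSet G s C) :=
    { toFun := fun v => ⟨v.1.1, v.1.2, v.2⟩
      map_rel' := fun h => h }
  refine C.connected_toSimpleGraph.map f ?_
  rintro ⟨v, hv, hvC⟩
  exact ⟨⟨⟨v, hv⟩, hvC⟩, rfl⟩

theorem outerBoundary_inducedCompSet_disjoint {V : Type} (G : SimpleGraph V) (s : Set V)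
    (C : (G.induce s).ConnectedComponent) {w : V}
    (hw : w ∈ outerBoundary G (inducedCompSet G s C)) : w ∉ s := by
  obtain ⟨hwC, v, ⟨hv, rfl⟩, hvw⟩ := hw
  intro hws
  refine hwC ⟨hws, ?_⟩
  rw [SimpleGraph.ConnectedComponent.eq]
  exact SimpleGraph.Adj.reachable (G := G.induce s) (u := ⟨w, hws⟩) (v := ⟨v, hv⟩) hvw.symm

/-- A walk that meets `K` without being contained in it meets the outer boundary of `K`. -/
theorem exists_mem_support_outerBoundary {V : Type} {G : SimpleGraph V} {K : Set V} {u v : V}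
    (p : G.Walk u v) {a b : V} (ha : a ∈ p.support) (haK : a ∈ K) (hb : b ∈ p.support)
    (hbK : b ∉ K) : ∃ w ∈ p.support, w ∈ outerBoundary G K := by
  induction p generalizing a b with
  | nil => simp_all
  | @cons x y z h p ih =>
    by_cases hex : (∃ c ∈ p.support, c ∈ K) ∧ ∃ d ∈ p.support, d ∉ K
    · obtain ⟨⟨c, hc, hcK⟩, d, hd, hdK⟩ := hex
      obtain ⟨w, hw, hwK⟩ := ih hc hcK hd hdK
      exact ⟨w, by simp [hw], hwK⟩
    · have hy := p.start_mem_support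
      by_cases hxK : x ∈ K
      · have hbp : b ∈ p.support := by
          rcases List.mem_cons.1 (SimpleGraph.Walk.support_cons h p ▸ hb) with rfl | hb
          · exact absurd hxK hbK
          · exact hb
        exact ⟨y, by simp, fun hyK => hex ⟨⟨y, hy, hyK⟩, b, hbp, hbK⟩, x, hxK, h⟩
      · have hap : a ∈ p.support := by
          rcases List.mem_cons.1 (SimpleGraph.Walk.support_cons h p ▸ ha) with rfl | ha
          · exact absurd haK hxK
          · exact ha
        have hyK : y ∈ K := by
          by_contra hyK
          exact hex ⟨⟨a, hap, haK⟩, y, hy, hyK⟩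
        exact ⟨x, by simp, hxK, y, hyK, h.symm⟩

/-- An optimal set for the paths inside `C` can be chosen inside `C`. -/
theorem exists_subset_card_le_hsOpt {V : Type} [Fintype V] (G : SimpleGraph V)
    (P : Set (Σ u v : V, G.Walk u v)) (C : Set V) :
    ∃ Y : Finset V, (↑Y : Set V) ⊆ C ∧ Y.card ≤ hsOpt G P C ∧
      ∀ p ∈ P, (∀ x ∈ p.2.2.support, x ∈ C) → ∃ x ∈ Y, x ∈ p.2.2.support := by
  classical
  obtain ⟨Y, hY, hhit⟩ := Nat.sInf_mem (s := {m : ℕ | ∃ Y : Finset V, Y.card = m ∧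
    ∀ p ∈ P, (∀ x ∈ p.2.2.support, x ∈ C) → ∃ x ∈ Y, x ∈ p.2.2.support})
    ⟨_, Finset.univ, rfl, fun p _ _ => ⟨p.1, by simp⟩⟩
  refine ⟨Y.filter (· ∈ C), fun x hx => (Finset.mem_filter.1 hx).2,
    (Finset.card_filter_le _ _).trans hY.le, ?_⟩
  intro p hp hpC
  obtain ⟨x, hx, hxp⟩ := hhit p hp hpC
  exact ⟨x, by simp [hx, hpC x hxp], hxp⟩

theorem hsOpt_le_ncard_inter {V : Type} [Fintype V] (G : SimpleGraph V)
    (P : Set (Σ u v : V, G.Walk u v)) (C : Set V) (X : Finset V)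
    (hX : ∀ p ∈ P, ∃ x ∈ X, x ∈ p.2.2.support) :
    hsOpt G P C ≤ ((↑X : Set V) ∩ C).ncard := by
  classical
  refine Nat.sInf_le ⟨X.filter (· ∈ C), ?_, ?_⟩
  · rw [← Set.ncard_coe_finset, Finset.coe_filter]
    rfl
  · intro p hp hpC
    obtain ⟨x, hx, hxp⟩ := hX p hp
    exact ⟨x, by simp [hx, hpC x hxp], hxp⟩

/-- **Lemma: budgets on paths.** Let `G` be a finite simple graph,
`P` a set of simple paths in `G`, and `S` the set of vertices of degree `≠ 2`, so
that `G − S` is the induced subgraph on `{v | degree v = 2}`.  There is a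
minimum-cardinality set `X` of vertices intersecting every path of `P` such that
for every connected component `C` of `G − S` we have
`opt(C) ≤ |X ∩ V(C)| ≤ opt(C) + 1`. -/
theorem stmt_11 {V : Type} [Fintype V] [DecidableEq V] (G : SimpleGraph V)
    [DecidableRel G.Adj]
    (P : Set (Σ u v : V, G.Walk u v)) (hP : ∀ p ∈ P, p.2.2.IsPath) :
    ∃ X : Finset V,
      (∀ p ∈ P, ∃ x ∈ X, x ∈ p.2.2.support) ∧
      (∀ Y : Finset V, (∀ p ∈ P, ∃ x ∈ Y, x ∈ p.2.2.support) → X.card ≤ Y.card) ∧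
      (∀ C : (G.induce {v : V | G.degree v = 2}).ConnectedComponent,
        hsOpt G P (inducedCompSet G {v : V | G.degree v = 2} C) ≤
            ((↑X : Set V) ∩ inducedCompSet G {v : V | G.degree v = 2} C).ncard ∧
          ((↑X : Set V) ∩ inducedCompSet G {v : V | G.degree v = 2} C).ncard ≤
            hsOpt G P (inducedCompSet G {v : V | G.degree v = 2} C) + 1) := by
  classical
  let hits : Finset V → Prop := fun X => ∀ p ∈ P, ∃ x ∈ X, x ∈ p.2.2.support
  obtain ⟨X₀, hX₀, hmin₀⟩ := Finset.exists_min_image (Finset.univ.filter hits) Finset.card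
    ⟨Finset.univ, by simpa [hits] using fun p _ => ⟨p.1, p.2.2.start_mem_support⟩⟩
  obtain ⟨X, hX, hmin⟩ := Finset.exists_min_image
    (Finset.univ.filter fun X => hits X ∧ X.card ≤ X₀.card)
    (fun X => (X.filter fun v => G.degree v = 2).card)
    ⟨X₀, by simpa using hX₀⟩
  simp only [Finset.mem_filter, Finset.mem_univ, true_and] at hX₀ hmin₀ hX hmin
  refine ⟨X, hX.1, fun Y hY => hX.2.trans (hmin₀ Y hY), fun C =>
    ⟨hsOpt_le_ncard_inter G P _ X hX.1, ?_⟩⟩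
  have hdeg : ∀ v ∈ inducedCompSet G {v : V | G.degree v = 2} C, G.degree v = 2 :=
    fun v hv => hv.1
  have hB := ncard_outerBoundary_le_two G _ (connected_induce_inducedCompSet G _ C) hdeg
  have hBdeg : ∀ w ∈ outerBoundary G (inducedCompSet G {v : V | G.degree v = 2} C),
      G.degree w ≠ 2 := fun w hw => outerBoundary_inducedCompSet_disjoint G _ C hw
  generalize inducedCompSet G {v : V | G.degree v = 2} C = K at hdeg hB hBdeg ⊢
  obtain ⟨Y, hYK, hYcard, hY⟩ := exists_subset_card_le_hsOpt G P K
  rw [Set.ncard_eq_toFinset_card'] at hB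
  have hXK : ((↑X : Set V) ∩ K).ncard = (X.filter (· ∈ K)).card := by
    rw [← Set.ncard_coe_finset, Finset.coe_filter]
    rfl
  rw [hXK]
  by_contra! hlarge
  have hsplit := Finset.card_filter_add_card_filter_not (s := X) (· ∈ K)
  let Z := X.filter (· ∉ K) ∪ Y ∪ (outerBoundary G K).toFinset
  have hZhits : hits Z := by
    intro p hp
    by_cases hpK : ∀ x ∈ p.2.2.support, x ∈ K
    · obtain ⟨x, hx, hxp⟩ := hY p hp hpK
      exact ⟨x, by simp [Z, hx], hxp⟩
    · push Not at hpK
      obtain ⟨b, hb, hbK⟩ := hpK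
      obtain ⟨x, hx, hxp⟩ := hX.1 p hp
      by_cases hxK : x ∈ K
      · obtain ⟨w, hw, hwB⟩ := exists_mem_support_outerBoundary p.2.2 hxp hxK hb hbK
        exact ⟨w, by simp [Z, hwB], hw⟩
      · exact ⟨x, by simp [Z, hx, hxK], hxp⟩
  have hZcard : Z.card ≤ X₀.card := by
    have h₁ : Z.card ≤ _ := Finset.card_union_le _ _
    have h₂ := Finset.card_union_le (X.filter (· ∉ K)) Y
    have h₃ := hX.2
    omega
  have hZdeg : (Z.filter fun v => G.degree v = 2) ⊆
      ((X.filter fun v => G.degree v = 2).filter (· ∉ K)) ∪ Y := by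
    intro v hv
    simp only [Z, Finset.mem_filter, Finset.mem_union, Set.mem_toFinset] at hv ⊢
    rcases hv with ⟨(hv | hv) | hv, hv2⟩
    · exact Or.inl ⟨⟨hv.1, hv2⟩, hv.2⟩
    · exact Or.inr hv
    · exact absurd hv2 (hBdeg v hv)
  have hXdeg : X.filter (· ∈ K) = (X.filter fun v => G.degree v = 2).filter (· ∈ K) := by
    ext v
    simp only [Finset.mem_filter]
    exact ⟨fun h => ⟨⟨h.1, hdeg v h.2⟩, h.2⟩, fun h => ⟨h.1.1, h.2⟩⟩
  have h₁ := hmin Z ⟨hZhits, hZcard⟩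
  have h₂ := (Finset.card_le_card hZdeg).trans (Finset.card_union_le _ _)
  have h₃ := Finset.card_filter_add_card_filter_not
    (s := X.filter fun v => G.degree v = 2) (· ∈ K)
  rw [hXdeg] at hlarge
  omega
end

section
/- Let φ be a totally ordered regular signed 3-CNF formula over variables x_1, …, x_n with truth value set [N], containing no trivially satisfied clause (i.e., no clause that contains literals x_i ≤ c_1 and x_i ≥ c_2 on the same variable with c_2 ≤ c_1 + 1). Build the flower graph G with core z and petals R_1, …, R_n, where each petal R_i is a path on N vertices r_{i,1}, …, r_{i,N} whose both endpoints are adjacent to z. Let S be the collection of subgraphs of G consisting of: for each clause C of φ, the subgraph S_C induced by z together with the vertices of the prefixes {r_{i,1}, …, r_{i,c}} for the literals x_i ≤ c of C and of the suffixes {r_{i,c}, …, r_{i,N}} for the literals x_i ≥ c of C; and, for each i ∈ [n], the path R_i. Then there is a set of at most n vertices of G intersecting every subgraph in S if and only if φ is satisfiable. -/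
/-!  Totally ordered regular signed CNF formulas.  A literal over variables
`Fin n` is a triple `(i, pol, c)` meaning `x_i ≥ c` when `pol = true` and
`x_i ≤ c` when `pol = false`; a clause is a list of literals and a formula a
list of clauses.  An assignment gives every variable a value in `[N]`. -/

/-- A signed literal `(i, pol, c)`: `x_i ≥ c` if `pol = true`, else `x_i ≤ c`. -/
abbrev SLit (n : ℕ) := Fin n × Bool × ℕ

/-- Satisfaction of a signed literal under an assignment `f`. -/
def slitSat {n : ℕ} (f : Fin n → ℕ) (l : SLit n) : Prop :=
  if l.2.1 then l.2.2 ≤ f l.1 else f l.1 ≤ l.2.2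

/-- The signed CNF formula `φ` is satisfiable over the truth value set `[N]`:
some assignment with values in `{1, …, N}` makes every clause contain a true
literal. -/
def SSat {n : ℕ} (N : ℕ) (φ : List (List (SLit n))) : Prop :=
  ∃ f : Fin n → ℕ, (∀ i, 1 ≤ f i ∧ f i ≤ N) ∧ ∀ C ∈ φ, ∃ l ∈ C, slitSat f l

/-- The petal segment associated to a literal: the prefix `{r_{i,1}, …, r_{i,c}}`
for a literal `x_i ≤ c` and the suffix `{r_{i,c}, …, r_{i,N}}` for `x_i ≥ c`. -/
def litSeg {n : ℕ} (N : ℕ) (l : SLit n) : Finset (FVertex n) :=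
  if l.2.1 then petalSeg l.1 (Finset.Icc l.2.2 N) else petalSeg l.1 (Finset.Icc 1 l.2.2)

/-- The (vertex set of the) subgraph `S_C` associated to a clause `C`: the core `z`
together with the petal segments of the literals of `C`. -/
def clauseSubgraph {n : ℕ} (N : ℕ) (C : List (SLit n)) : Finset (FVertex n) :=
  insert fz (C.foldr (fun l acc => litSeg N l ∪ acc) ∅)

theorem fv_mem_petalSeg {n : ℕ} {i k : Fin n} {j : ℕ} {s : Finset ℕ} :
    fv k j ∈ petalSeg i s ↔ k = i ∧ j ∈ s := by
  simp only [petalSeg, fv, Finset.mem_image, Option.some.injEq, Prod.mk.injEq]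
  constructor
  · rintro ⟨a, ha, rfl, rfl⟩
    exact ⟨rfl, ha⟩
  · rintro ⟨rfl, hj⟩
    exact ⟨j, hj, rfl, rfl⟩

/-- A vertex of petal `k` lying in the range of an assignment `f` belongs to the segment of a
literal exactly when the literal is on `x_k` and is satisfied by `f`. -/
theorem fv_mem_litSeg {n N : ℕ} {f : Fin n → ℕ} (hf : ∀ i, 1 ≤ f i ∧ f i ≤ N) {k : Fin n}
    {l : SLit n} : fv k (f k) ∈ litSeg N l ↔ k = l.1 ∧ slitSat f l := by
  have hk := hf k
  unfold litSeg slitSat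
  split_ifs <;> rw [fv_mem_petalSeg, Finset.mem_Icc] <;> constructor <;> rintro ⟨rfl, h⟩ <;>
    exact ⟨rfl, by omega⟩

theorem mem_clauseSubgraph {n N : ℕ} {C : List (SLit n)} {x : FVertex n} :
    x ∈ clauseSubgraph N C ↔ x = fz ∨ ∃ l ∈ C, x ∈ litSeg N l := by
  rw [clauseSubgraph, Finset.mem_insert]
  refine or_congr_right ?_
  induction C with
  | nil => simp
  | cons l C ih => simp [ih]

/-- The vertices selected by an assignment: `r_{i, f i}` for every petal `i`. -/
def assignmentVertices {n : ℕ} (f : Fin n → ℕ) : Finset (FVertex n) :=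
  Finset.univ.image (fun i => fv i (f i))

theorem mem_assignmentVertices {n : ℕ} {f : Fin n → ℕ} {x : FVertex n} :
    x ∈ assignmentVertices f ↔ ∃ i, fv i (f i) = x := by
  simp [assignmentVertices]

theorem card_assignmentVertices {n : ℕ} (f : Fin n → ℕ) : (assignmentVertices f).card = n := by
  rw [assignmentVertices, Finset.card_image_of_injective, Finset.card_univ, Fintype.card_fin]
  intro i j hij
  simp only [fv, Option.some.injEq, Prod.mk.injEq] at hij
  exact hij.1

theorem assignmentVertices_hits_clause_iff {n N : ℕ} {f : Fin n → ℕ}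
    (hf : ∀ i, 1 ≤ f i ∧ f i ≤ N) {C : List (SLit n)} :
    (assignmentVertices f ∩ clauseSubgraph N C).Nonempty ↔ ∃ l ∈ C, slitSat f l := by
  constructor
  · rintro ⟨x, hx⟩
    rw [Finset.mem_inter, mem_assignmentVertices, mem_clauseSubgraph] at hx
    obtain ⟨⟨i, rfl⟩, hz | ⟨l, hl, hil⟩⟩ := hx
    · simp [fv, fz] at hz
    · exact ⟨l, hl, ((fv_mem_litSeg hf).1 hil).2⟩
  · rintro ⟨l, hl, hsat⟩
    exact ⟨fv l.1 (f l.1), Finset.mem_inter.2 ⟨mem_assignmentVertices.2 ⟨l.1, rfl⟩,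
      mem_clauseSubgraph.2 (Or.inr ⟨l, hl, (fv_mem_litSeg hf).2 ⟨rfl, hsat⟩⟩)⟩⟩

/-- A set of at most `n` vertices hitting all `n` petals comes from an assignment. -/
theorem exists_eq_assignmentVertices {n N : ℕ} {X : Finset (FVertex n)} (hcard : X.card ≤ n)
    (hX : ∀ i : Fin n, (X ∩ petalSeg i (Finset.Icc 1 N)).Nonempty) :
    ∃ f : Fin n → ℕ, (∀ i, 1 ≤ f i ∧ f i ≤ N) ∧ assignmentVertices f = X := by
  have hpick : ∀ i : Fin n, ∃ j, (1 ≤ j ∧ j ≤ N) ∧ fv i j ∈ X := by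
    intro i
    obtain ⟨x, hx⟩ := hX i
    rw [Finset.mem_inter, petalSeg, Finset.mem_image] at hx
    obtain ⟨hxX, j, hj, rfl⟩ := hx
    exact ⟨j, Finset.mem_Icc.1 hj, hxX⟩
  choose f hf hfX using hpick
  refine ⟨f, hf, Finset.eq_of_subset_of_card_le ?_ ?_⟩
  · intro x hx
    obtain ⟨i, rfl⟩ := mem_assignmentVertices.1 hx
    exact hfX i
  · rwa [card_assignmentVertices]

/-- **Theorem: W[1]-hardness reduction.** Let `φ` be a totally
ordered regular signed 3-CNF formula over `x_1, …, x_n` with truth value set `[N]`,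
with no trivially satisfied clause.  Build the flower graph `G` with core `z` and
petals `R_1, …, R_n`, each a path on `N` vertices with both endpoints adjacent to
`z`, and let the collection `S` consist of the subgraphs `S_C` (for the clauses
`C` of `φ`) and the petals `R_i`.  Then there is a set of at most `n` vertices of
`G` intersecting every subgraph of `S` if and only if `φ` is satisfiable. -/
theorem stmt_13 {n : ℕ} (N : ℕ) (hN : 1 ≤ N) (φ : List (List (SLit n)))
    (hlen : ∀ C ∈ φ, C.length ≤ 3)
    (hrange : ∀ C ∈ φ, ∀ l ∈ C, 1 ≤ l.2.2 ∧ l.2.2 ≤ N)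
    (htriv : ∀ C ∈ φ, ∀ l₁ ∈ C, ∀ l₂ ∈ C, l₁.1 = l₂.1 →
      l₁.2.1 = false → l₂.2.1 = true → ¬ l₂.2.2 ≤ l₁.2.2 + 1) :
    (∃ X : Finset (FVertex n),
      X.card ≤ n ∧
      (∀ x ∈ X, x = fz ∨ ∃ (i : Fin n) (j : ℕ), 1 ≤ j ∧ j ≤ N ∧ x = fv i j) ∧
      (∀ C ∈ φ, (X ∩ clauseSubgraph N C).Nonempty) ∧
      (∀ i : Fin n, (X ∩ petalSeg i (Finset.Icc 1 N)).Nonempty)) ↔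
    SSat N φ := by
  constructor
  · rintro ⟨X, hcard, -, hclause, hpetal⟩
    obtain ⟨f, hf, rfl⟩ := exists_eq_assignmentVertices hcard hpetal
    exact ⟨f, hf, fun C hC => (assignmentVertices_hits_clause_iff hf).1 (hclause C hC)⟩
  · rintro ⟨f, hf, hsat⟩
    refine ⟨assignmentVertices f, (card_assignmentVertices f).le, ?_,
      fun C hC => (assignmentVertices_hits_clause_iff hf).2 (hsat C hC), fun i => ?_⟩
    · intro x hx
      obtain ⟨i, rfl⟩ := mem_assignmentVertices.1 hx
      exact Or.inr ⟨i, f i, (hf i).1, (hf i).2, rfl⟩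
    · exact ⟨fv i (f i), Finset.mem_inter.2 ⟨mem_assignmentVertices.2 ⟨i, rfl⟩,
        fv_mem_petalSeg.2 ⟨rfl, Finset.mem_Icc.2 (hf i)⟩⟩⟩
end

section
/- Let T be a finite tree on vertex set U rooted at a leaf, and let F be a family of subsets of U such that every S ∈ F induces a subtree (a connected subgraph) of T. Let v be a vertex of maximum depth such that there is a set S ∈ F all of whose members belong to the subtree of T rooted at v. Then there is a minimum-cardinality hitting set of F (a set X ⊆ U of minimum size with X ∩ S ≠ ∅ for all S ∈ F) that contains v. -/
/-- The subtree of the tree `G`, rooted at `r`, that is rooted at `v`: the set of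
vertices `u` such that `v` lies on the (unique) `r`–`u` path, characterized by the
distance identity `dist r u = dist r v + dist v u`. -/
def subtreeAt {U : Type} (G : SimpleGraph U) (r v : U) : Set U :=
  {u : U | G.dist r u = G.dist r v + G.dist v u}

namespace SimpleGraph

variable {U : Type} {G : SimpleGraph U}

/-- In a rooted tree every vertex has at most one neighbour closer to the root. -/
theorem IsTree.eq_of_adj_of_dist_add_one (hT : G.IsTree) {r a b b' : U}
    (hb : G.Adj b a) (hb' : G.Adj b' a) (h : G.dist r a = G.dist r b + 1)
    (h' : G.dist r a = G.dist r b' + 1) : b = b' := by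
  obtain ⟨p, hp⟩ := hT.connected.exists_walk_length_eq_dist r b
  obtain ⟨q, hq⟩ := hT.connected.exists_walk_length_eq_dist r b'
  have hpp : (p.concat hb).IsPath :=
    (p.concat hb).isPath_of_length_eq_dist (by rw [Walk.length_concat, hp, h])
  have hqp : (q.concat hb').IsPath :=
    (q.concat hb').isPath_of_length_eq_dist (by rw [Walk.length_concat, hq, h'])
  have heq := (hT.existsUnique_path r a).unique hpp hqp
  exact (Walk.concat_inj heq).1

/-- A vertex distinct from the source has a neighbour one step closer to the source. -/
theorem Connected.exists_adj_dist_add_one (hG : G.Connected) {u w : U} (h : u ≠ w) :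
    ∃ z, G.Adj z w ∧ G.dist u w = G.dist u z + 1 := by
  obtain ⟨p, hp⟩ := hG.exists_walk_length_eq_dist w u
  cases p with
  | nil => exact absurd rfl h
  | @cons _ z _ hwz q =>
    refine ⟨z, hwz.symm, ?_⟩
    have h1 := dist_le q
    have h2 := hG.dist_triangle (u := w) (v := z) (w := u)
    rw [dist_eq_one_iff_adj.2 hwz] at h2
    rw [Walk.length_cons] at hp
    rw [dist_comm (u := u) (v := w), dist_comm (u := u) (v := z)]
    omega

/-- The subtree below `c` can only be left through the parent of `c`. -/
theorem IsTree.mem_subtreeAt_of_adj (hT : G.IsTree) {r v c a b : U} (hvc : G.Adj v c)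
    (hc : G.dist r c = G.dist r v + 1) (ha : a ∈ subtreeAt G r c) (hab : G.Adj a b)
    (hbv : b ≠ v) : b ∈ subtreeAt G r c := by
  have ha : G.dist r a = G.dist r c + G.dist c a := ha
  change G.dist r b = G.dist r c + G.dist c b
  have hne := hT.dist_ne_of_adj r hab
  have hab1 := dist_eq_one_iff_adj.2 hab
  have hba1 := dist_eq_one_iff_adj.2 hab.symm
  have h1 := hT.connected.dist_triangle (u := r) (v := a) (w := b)
  have h2 := hT.connected.dist_triangle (u := r) (v := b) (w := a)
  have h3 := hT.connected.dist_triangle (u := c) (v := a) (w := b)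
  have h4 := hT.connected.dist_triangle (u := r) (v := c) (w := b)
  rcases Nat.lt_or_gt_of_ne hne with hlt | hgt
  · omega
  · have hparent : G.dist r a = G.dist r b + 1 := by omega
    by_cases hca : c = a
    · subst hca
      exact absurd (hT.eq_of_adj_of_dist_add_one hab.symm hvc hparent hc) hbv
    · obtain ⟨z, hza, hz⟩ := hT.connected.exists_adj_dist_add_one hca
      have h5 := hT.connected.dist_triangle (u := r) (v := c) (w := z)
      have h6 := hT.connected.dist_triangle (u := r) (v := z) (w := a)
      rw [dist_eq_one_iff_adj.2 hza] at h6
      have hbz := hT.eq_of_adj_of_dist_add_one hab.symm hza hparent (by omega)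
      subst hbz
      omega

/-- A connected set avoiding `v` that meets the subtree below `v` lies in the subtree below a
child of `v`. -/
theorem IsTree.exists_subset_subtreeAt (hT : G.IsTree) {r v x : U} {S : Set U}
    (hS : (G.induce S).Connected) (hxS : x ∈ S) (hvS : v ∉ S) (hx : x ∈ subtreeAt G r v) :
    ∃ c, G.dist r c = G.dist r v + 1 ∧ S ⊆ subtreeAt G r c := by
  have hx : G.dist r x = G.dist r v + G.dist v x := hx
  have hxv : x ≠ v := fun h => hvS (h ▸ hxS)
  obtain ⟨c, hcv, hcx⟩ := hT.connected.exists_adj_dist_add_one hxv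
  rw [dist_comm (u := x) (v := v), dist_comm (u := x) (v := c)] at hcx
  have h1 := hT.connected.dist_triangle (u := r) (v := c) (w := x)
  have h2 := hT.connected.dist_triangle (u := r) (v := v) (w := c)
  rw [dist_eq_one_iff_adj.2 hcv.symm] at h2
  have hc : G.dist r c = G.dist r v + 1 := by omega
  refine ⟨c, hc, fun y hy => ?_⟩
  have hxc : x ∈ subtreeAt G r c := by
    change G.dist r x = G.dist r c + G.dist c x
    omega
  have key : ∀ a b : S, (G.induce S).Walk a b → (a : U) ∈ subtreeAt G r c →
      (b : U) ∈ subtreeAt G r c := by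
    intro a b p
    induction p with
    | nil => exact id
    | @cons _ z _ hadj _ ih =>
      exact fun ha => ih (hT.mem_subtreeAt_of_adj hcv.symm hc ha hadj fun h => hvS (h ▸ z.2))
  obtain ⟨p⟩ := hS.preconnected ⟨x, hxS⟩ ⟨y, hy⟩
  exact key _ _ p hxc

end SimpleGraph

/-- **folklore greedy step for hypertrees.** Let `T` be a finite tree
on vertex set `U` rooted at a leaf `r`, and let `F` be a family of subsets of `U`
each of which induces a subtree (a connected subgraph) of `T`.  Let `v` be a vertex
of maximum depth (distance from `r`) such that some `S ∈ F` lies entirely in the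
subtree rooted at `v`.  Then there is a minimum-cardinality hitting set of `F`
containing `v`. -/
theorem stmt_16 {U : Type} [Fintype U] [DecidableEq U] (G : SimpleGraph U)
    [DecidableRel G.Adj] (hT : G.IsTree) (r : U) (hr : G.degree r ≤ 1)
    (F : Set (Finset U)) (hF : ∀ S ∈ F, (G.induce (↑S : Set U)).Connected)
    (v : U)
    (hv : ∃ S ∈ F, (↑S : Set U) ⊆ subtreeAt G r v)
    (hmax : ∀ w : U, (∃ S ∈ F, (↑S : Set U) ⊆ subtreeAt G r w) →
      G.dist r w ≤ G.dist r v) :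
    ∃ X : Finset U, v ∈ X ∧ (∀ S ∈ F, (X ∩ S).Nonempty) ∧
      ∀ Y : Finset U, (∀ S ∈ F, (Y ∩ S).Nonempty) → X.card ≤ Y.card := by
  obtain ⟨S₀, hS₀, hS₀v⟩ := hv
  have huniv : ∀ S ∈ F, (Finset.univ ∩ S).Nonempty := by
    intro S hS
    obtain ⟨x⟩ := (hF S hS).nonempty
    exact ⟨x.1, by simp⟩
  obtain ⟨X, hX, hXmin⟩ :=
    (Set.toFinite {X : Finset U | ∀ S ∈ F, (X ∩ S).Nonempty}).exists_minimalFor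
      Finset.card _ ⟨Finset.univ, huniv⟩
  have hXmin : ∀ Y : Finset U, (∀ S ∈ F, (Y ∩ S).Nonempty) → X.card ≤ Y.card := fun Y hY =>
    (le_total X.card Y.card).elim id (hXmin hY)
  obtain ⟨x, hx⟩ := hX S₀ hS₀
  obtain ⟨hxX, hxS₀⟩ := Finset.mem_inter.1 hx
  refine ⟨insert v (X.erase x), Finset.mem_insert_self _ _, fun S hS => ?_, fun Y hY => ?_⟩
  · by_cases hvS : v ∈ S
    · exact ⟨v, by simp [hvS]⟩
    obtain ⟨y, hy⟩ := hX S hS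
    obtain ⟨hyX, hyS⟩ := Finset.mem_inter.1 hy
    by_cases hyx : y = x
    · subst hyx
      obtain ⟨c, hc, hSc⟩ := hT.exists_subset_subtreeAt (hF S hS) (Finset.mem_coe.2 hyS)
        (by simpa using hvS) (hS₀v (Finset.mem_coe.2 hxS₀))
      have := hmax c ⟨S, hS, hSc⟩
      omega
    · exact ⟨y, by simp [hyx, hyX, hyS]⟩
  · calc (insert v (X.erase x)).card ≤ (X.erase x).card + 1 := Finset.card_insert_le _ _
      _ = X.card := Finset.card_erase_add_one hxX
      _ ≤ Y.card := hXmin Y hY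
end

section
/- Let G be a connected finite simple graph of minimum degree at least two, let S be the nonempty set of vertices of G of degree at least three, let P be a set of simple paths in G, let S' be a proper subset of S, and let b assign a nonnegative integer to every connected component of G − S. Let (G*, z, P*) be the result of the construction that deletes S', removes paths hit by S', removes paths fully containing a positive-budget component, deletes zero-budget components from the graph and from all paths, and identifies S ∖ S' into the core z; number the petals of the flower G* as R_1, …, R_n, and let b*(i) = b(C_i) where C_i is the component of G − S corresponding to petal R_i. Then the following are equivalent: (1) there is a set X of vertices of G intersecting every path in P such that X ∩ S = S' and |X ∩ V(C)| = b(C) for every connected component C of G − S; (2) the instance (G*, z, P*, b*) of Hitting Paths in a Flower has a solution. -/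
/-!  The reduction from `Hitting Paths in a Graph` to `Hitting Paths in a Flower`.

`G` is a connected finite simple graph of minimum degree at least two, `S` is the
(nonempty) set of its vertices of degree at least three, `S' ⊊ S` is the guessed
set of solution vertices inside `S`, and `b` assigns a budget to every connected
component of `G − S`.  The construction deletes `S'` (and the paths it hits),
removes the paths fully containing a positive-budget component, deletes the
zero-budget components (from the graph and from the paths), and identifies
`S ∖ S'` into a single core vertex `z`.

The vertex set of the resulting graph `G*` is `Option {v // KeepV G b v}`:
`none` is the core `z` and `some u` represents the surviving vertex `u` of `G`
(a vertex outside `S` lying in a component of `G − S` of positive budget).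
Since hitting a path only depends on its vertex set, the transformed collection
`P*` is recorded by vertex sets. -/

/-- The complement of `S`: vertices of degree less than three. -/
def lowSet {V : Type} [Fintype V] (G : SimpleGraph V) [DecidableRel G.Adj] : Set V :=
  {v : V | G.degree v < 3}

/-- The vertices surviving the construction: vertices outside `S` whose component
in `G − S` has positive budget. -/
def KeepV {V : Type} [Fintype V] (G : SimpleGraph V) [DecidableRel G.Adj]
    (b : (G.induce (lowSet G)).ConnectedComponent → ℕ) (v : V) : Prop :=
  ∃ h : v ∈ lowSet G, 0 < b ((G.induce (lowSet G)).connectedComponentMk ⟨v, h⟩)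

/-- The graph `G*` produced by the construction: kept vertices retain their
adjacencies, and the core `z = none` (the identification of `S ∖ S'`) is adjacent
to the kept vertices having a `G`-neighbor in `S ∖ S'`. -/
def Gstar {V : Type} [Fintype V] (G : SimpleGraph V) [DecidableRel G.Adj]
    (b : (G.induce (lowSet G)).ConnectedComponent → ℕ) (S' : Set V) :
    SimpleGraph (Option {v : V // KeepV G b v}) :=
  SimpleGraph.fromRel (fun a c =>
    match a, c with
    | some u, some w => G.Adj u.1 w.1
    | some u, none => ∃ s : V, 3 ≤ G.degree s ∧ s ∉ S' ∧ G.Adj u.1 s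
    | none, _ => False)

/-- The vertex set of a path of `P` (a walk packaged with its endpoints). -/
def walkSupp {V : Type} (G : SimpleGraph V) (p : Σ u v : V, G.Walk u v) : Set V :=
  {x : V | x ∈ p.2.2.support}

/-- A path is removed by Step 1 (it contains a vertex of `S'`) or by Step 2 (it
contains all vertices of some component of `G − S` of positive budget). -/
def droppedPath {V : Type} [Fintype V] (G : SimpleGraph V) [DecidableRel G.Adj]
    (b : (G.induce (lowSet G)).ConnectedComponent → ℕ) (S' : Set V)
    (p : Σ u v : V, G.Walk u v) : Prop :=
  (∃ x ∈ walkSupp G p, x ∈ S') ∨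
  (∃ C : (G.induce (lowSet G)).ConnectedComponent,
    0 < b C ∧ inducedCompSet G (lowSet G) C ⊆ walkSupp G p)

/-- Steps 3 and 4 applied to the vertex set `A` of a surviving path: keep the
surviving (kept) vertices of `A`, and replace the vertices of `A` in `S ∖ S'`
(collectively) by the core `z = none`. -/
def transformSet {V : Type} [Fintype V] (G : SimpleGraph V) [DecidableRel G.Adj]
    (b : (G.induce (lowSet G)).ConnectedComponent → ℕ) (S' : Set V) (A : Set V) :
    Set (Option {v : V // KeepV G b v}) :=
  {w : Option {v : V // KeepV G b v} |
    (∃ u : {v : V // KeepV G b v}, w = some u ∧ u.1 ∈ A) ∨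
    (w = none ∧ ∃ x ∈ A, 3 ≤ G.degree x ∧ x ∉ S')}

/-- The collection `P*` of transformed subgraphs (as vertex sets). -/
def Pstar {V : Type} [Fintype V] (G : SimpleGraph V) [DecidableRel G.Adj]
    (b : (G.induce (lowSet G)).ConnectedComponent → ℕ) (S' : Set V)
    (P : Set (Σ u v : V, G.Walk u v)) :
    Set (Set (Option {v : V // KeepV G b v})) :=
  {B | ∃ p ∈ P, ¬ droppedPath G b S' p ∧ B = transformSet G b S' (walkSupp G p)}

/-- `H` is a flower graph with core `z`: every connected component of `H − z` is a
path — it carries a Hamiltonian simple path of the component — no interior vertex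
of which is adjacent to `z`. -/
def IsFlowerWithCore {X : Type} (H : SimpleGraph X) (z : X) : Prop :=
  ∀ C : (H.induce {x : X | x ≠ z}).ConnectedComponent,
    ∃ (a b : {x : X | x ≠ z}) (w : (H.induce {x : X | x ≠ z}).Walk a b),
      w.IsPath ∧
      (∀ x : {x : X | x ≠ z},
        ((H.induce {x : X | x ≠ z}).connectedComponentMk x = C ↔ x ∈ w.support)) ∧
      (∀ x : {x : X | x ≠ z}, x ∈ w.support → x ≠ a → x ≠ b → ¬ H.Adj z x.1)

theorem notMem_lowSet_iff {V : Type} [Fintype V] (G : SimpleGraph V) [DecidableRel G.Adj]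
    {v : V} : v ∉ lowSet G ↔ v ∈ {v : V | 3 ≤ G.degree v} := by
  simp [lowSet]

/-- If `Y` and `X` agree on the kept vertices, then they contain equally many vertices of
every component of positive budget. -/
theorem ncard_inter_petal_eq {V : Type} [Fintype V] (G : SimpleGraph V) [DecidableRel G.Adj]
    (b : (G.induce (lowSet G)).ConnectedComponent → ℕ)
    (X : Set V) (Y : Set (Option {v : V // KeepV G b v}))
    (hXY : ∀ u : {v : V // KeepV G b v}, some u ∈ Y ↔ u.1 ∈ X)
    (C : (G.induce (lowSet G)).ConnectedComponent) (hC : 0 < b C) :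
    (Y ∩ {w : Option {v : V // KeepV G b v} |
      ∃ u : {v : V // KeepV G b v}, w = some u ∧
        u.1 ∈ inducedCompSet G (lowSet G) C}).ncard =
      (X ∩ inducedCompSet G (lowSet G) C).ncard := by
  rw [← Set.ncard_image_of_injective _ (Option.map_injective Subtype.val_injective),
    ← Set.ncard_image_of_injective (X ∩ _) (Option.some_injective V)]
  congr 1
  ext w
  constructor
  · rintro ⟨_, ⟨hY, u, rfl, huC⟩, rfl⟩
    exact ⟨u.1, ⟨(hXY u).1 hY, huC⟩, rfl⟩
  · rintro ⟨v, ⟨hX, hv, rfl⟩, rfl⟩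
    let u : {v : V // KeepV G b v} := ⟨v, hv, hC⟩
    exact ⟨some u, ⟨(hXY u).2 hX, u, rfl, hv, rfl⟩, rfl⟩

/-- **Claim 2 of Theorem `pathsingraph:fpt`.** Let `G` be a connected
finite simple graph of minimum degree at least two, `S` its nonempty set of vertices
of degree at least three, `P` a set of simple paths in `G`, `S' ⊊ S`, and `b` a
budget function on the components of `G − S`.  The following are equivalent:
(1) there is a set `X` of vertices of `G` intersecting every path of `P` with
`X ∩ S = S'` and `|X ∩ V(C)| = b(C)` for every component `C` of `G − S`;
(2) the produced instance `(G*, z, P*, b*)` of Hitting Paths in a Flower has a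
solution, i.e. a set `Y` of vertices of `G*` avoiding the core `z`, intersecting
every path of `P*`, and containing exactly `b(C)` vertices on the petal
corresponding to each positive-budget component `C` of `G − S`. -/
theorem stmt_19 {V : Type} [Fintype V] [DecidableEq V] (G : SimpleGraph V)
    [DecidableRel G.Adj] (hconn : G.Connected) (hdeg : ∀ v : V, 2 ≤ G.degree v)
    (hS : {v : V | 3 ≤ G.degree v}.Nonempty)
    (P : Set (Σ u v : V, G.Walk u v)) (hP : ∀ p ∈ P, p.2.2.IsPath)
    (S' : Set V) (hS' : S' ⊆ {v : V | 3 ≤ G.degree v})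
    (hproper : S' ≠ {v : V | 3 ≤ G.degree v})
    (b : (G.induce (lowSet G)).ConnectedComponent → ℕ) :
    (∃ X : Finset V,
      (∀ p ∈ P, ∃ x ∈ X, x ∈ p.2.2.support) ∧
      (↑X ∩ {v : V | 3 ≤ G.degree v} : Set V) = S' ∧
      (∀ C : (G.induce (lowSet G)).ConnectedComponent,
        ((↑X : Set V) ∩ inducedCompSet G (lowSet G) C).ncard = b C)) ↔
    (∃ Y : Finset (Option {v : V // KeepV G b v}),
      none ∉ Y ∧
      (∀ B ∈ Pstar G b S' P, ∃ y ∈ Y, (y : Option {v : V // KeepV G b v}) ∈ B) ∧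
      (∀ C : (G.induce (lowSet G)).ConnectedComponent, 0 < b C →
        ((↑Y : Set (Option {v : V // KeepV G b v})) ∩
          {w : Option {v : V // KeepV G b v} |
            ∃ u : {v : V // KeepV G b v}, w = some u ∧
              u.1 ∈ inducedCompSet G (lowSet G) C}).ncard = b C)) := by
  classical
  constructor
  · rintro ⟨X, hhit, hXS, hcard⟩
    refine ⟨Finset.univ.filter fun w => ∃ u : {v : V // KeepV G b v}, w = some u ∧ u.1 ∈ X,
      by simp, ?_, fun C hC => ?_⟩
    · rintro B ⟨p, hp, hdrop, rfl⟩
      obtain ⟨x, hxX, hxp⟩ := hhit p hp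
      have hlow : x ∈ lowSet G := by
        by_contra hx
        have hxS : x ∈ (↑X ∩ {v : V | 3 ≤ G.degree v} : Set V) := ⟨hxX, (notMem_lowSet_iff G).1 hx⟩
        exact hdrop (Or.inl ⟨x, hxp, hXS ▸ hxS⟩)
      have hpos : 0 < b ((G.induce (lowSet G)).connectedComponentMk ⟨x, hlow⟩) := by
        rw [← hcard, Set.ncard_pos]
        exact ⟨x, hxX, hlow, rfl⟩
      let u : {v : V // KeepV G b v} := ⟨x, hlow, hpos⟩
      exact ⟨some u, Finset.mem_filter.2 ⟨Finset.mem_univ _, u, rfl, hxX⟩,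
        Or.inl ⟨u, rfl, hxp⟩⟩
    · rw [← hcard C]
      refine ncard_inter_petal_eq G b X _ (fun u => ?_) C hC
      simp only [Finset.coe_filter, Finset.mem_univ, true_and, Set.mem_ofPred_eq,
        Option.some.injEq, exists_eq_left', Finset.mem_coe]
  · rintro ⟨Y, hnone, hhit, hcard⟩
    let X : Finset V := Finset.univ.filter fun v =>
      v ∈ S' ∨ ∃ u : {v : V // KeepV G b v}, u.1 = v ∧ some u ∈ Y
    have mem_X : ∀ v, v ∈ X ↔ v ∈ S' ∨ ∃ u : {v : V // KeepV G b v}, u.1 = v ∧ some u ∈ Y :=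
      fun v => by simp only [X, Finset.mem_filter, Finset.mem_univ, true_and]
    have not_mem_of_low : ∀ v ∈ lowSet G, v ∉ S' :=
      fun v hv hvS => (notMem_lowSet_iff G).2 (hS' hvS) hv
    refine ⟨X, fun p hp => ?_, ?_, fun C => ?_⟩
    · by_cases hdrop : droppedPath G b S' p
      · rcases hdrop with ⟨x, hxp, hxS⟩ | ⟨C, hC, hCp⟩
        · exact ⟨x, (mem_X x).2 (Or.inl hxS), hxp⟩
        · have hpos := hC
          rw [← hcard C hC, Set.ncard_pos] at hpos
          obtain ⟨_, hY, u, rfl, huC⟩ := hpos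
          exact ⟨u.1, (mem_X _).2 (Or.inr ⟨u, rfl, hY⟩), hCp huC⟩
      · obtain ⟨y, hy, ⟨u, rfl, hup⟩ | ⟨rfl, -⟩⟩ := hhit _ ⟨p, hp, hdrop, rfl⟩
        · exact ⟨u.1, (mem_X _).2 (Or.inr ⟨u, rfl, hy⟩), hup⟩
        · exact absurd hy hnone
    · ext v
      constructor
      · rintro ⟨hv, hdv⟩
        rcases (mem_X v).1 hv with hvS | ⟨u, rfl, -⟩
        · exact hvS
        · exact absurd u.2.1 ((notMem_lowSet_iff G).2 hdv)
      · exact fun hv => ⟨(mem_X v).2 (Or.inl hv), hS' hv⟩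
    · rcases Nat.eq_zero_or_pos (b C) with hC | hC
      · rw [hC, Set.ncard_eq_zero, Set.eq_empty_iff_forall_notMem]
        rintro v ⟨hv, hlow, rfl⟩
        rcases (mem_X v).1 hv with hvS | ⟨u, rfl, -⟩
        · exact not_mem_of_low v hlow hvS
        · obtain ⟨_, hpos⟩ := u.2
          exact hpos.ne' hC
      · rw [← hcard C hC]
        refine (ncard_inter_petal_eq G b X Y (fun u => ?_) C hC).symm
        rw [Finset.mem_coe, Finset.mem_coe, mem_X]
        constructor
        · exact fun hu => Or.inr ⟨u, rfl, hu⟩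
        · rintro (huS | ⟨w, hw, hY⟩)
          · exact absurd huS (not_mem_of_low _ u.2.1)
          · exact Subtype.ext hw ▸ hY
end
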